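/- arXiv:0907.4230 — 7 statements merged into one kernel-verified Lean document; each statement's English description precedes it below -/
import Mathlib

section
/- For every integer k ≥ 2 and positive integers v, b, a (v,b,2,k)-combinatorial configuration exists if and only if there exists a connected k-regular simple graph with b vertices and v edges. -/
open SimpleGraph

/-- A `(v, b, r, k)`-combinatorial configuration: a bipartite simple graph on
`Fin v ⊕ Fin b` (left part `Fin v`, right part `Fin b`), connected (here:
preconnected, so that the empty graph counts as a configuration), where every
left vertex has degree `r`, every right vertex has degree `k`, and there is no
cycle of length `4`. -/
def IsConfiguration (v b r k : ℕ) (G : SimpleGraph (Fin v ⊕ Fin b)) : Prop :=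
  (∀ i j : Fin v, ¬ G.Adj (Sum.inl i) (Sum.inl j)) ∧
  (∀ i j : Fin b, ¬ G.Adj (Sum.inr i) (Sum.inr j)) ∧
  G.Preconnected ∧
  (∀ i : Fin v, (G.neighborSet (Sum.inl i)).ncard = r) ∧
  (∀ j : Fin b, (G.neighborSet (Sum.inr j)).ncard = k) ∧
  (∀ (x : Fin v ⊕ Fin b) (c : G.Walk x x), c.IsCycle → c.length ≠ 4)

/-- The tuple `(v, b, r, k)` is configurable if a `(v,b,r,k)`-combinatorial
configuration exists. -/
def Configurable (v b r k : ℕ) : Prop :=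
  ∃ G : SimpleGraph (Fin v ⊕ Fin b), IsConfiguration v b r k G

/-- `D r k` is the set of `d ∈ ℕ` such that
`(d·k/gcd(r,k), d·r/gcd(r,k), r, k)` is configurable. -/
def D (r k : ℕ) : Set ℕ :=
  {d | Configurable (d * k / Nat.gcd r k) (d * r / Nat.gcd r k) r k}

theorem aux_ncard {v b : ℕ} (G : SimpleGraph (Fin v ⊕ Fin b)) (H : SimpleGraph (Fin b))
    (e : Fin v → Sym2 (Fin b)) (he : Function.Injective e) (hr : Set.range e = H.edgeSet)
    (hG : ∀ i j, G.Adj (Sum.inl i) (Sum.inr j) ↔ j ∈ e i)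
    (hbb : ∀ i j : Fin b, ¬ G.Adj (Sum.inr i) (Sum.inr j)) (x : Fin b) :
    (H.neighborSet x).ncard = (G.neighborSet (Sum.inr x)).ncard := by
  have h1 : (H.neighborSet x).ncard = (H.incidenceSet x).ncard := by
    rw [← Nat.card_coe_set_eq, ← Nat.card_coe_set_eq]
    exact Nat.card_congr (H.incidenceSetEquivNeighborSet x).symm
  have h2 : H.incidenceSet x = e '' {i | x ∈ e i} := by
    ext s
    simp only [incidenceSet, Set.mem_image, Set.mem_ofPred_eq, ← hr]
    constructor
    · rintro ⟨⟨i, rfl⟩, h⟩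
      exact ⟨i, h, rfl⟩
    · rintro ⟨i, h, rfl⟩
      exact ⟨⟨i, rfl⟩, h⟩
  have h3 : G.neighborSet (Sum.inr x) = Sum.inl '' {i | x ∈ e i} := by
    ext s
    rcases s with i | j
    · simp [G.adj_comm (Sum.inr x), hG]
    · simp [hbb]
  rw [h1, h2, h3, Set.ncard_image_of_injective _ he,
    Set.ncard_image_of_injective _ Sum.inl_injective]

theorem aux_conn {v b : ℕ} (G : SimpleGraph (Fin v ⊕ Fin b)) (H : SimpleGraph (Fin b))
    (e : Fin v → Sym2 (Fin b)) (hr : Set.range e = H.edgeSet)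
    (hG : ∀ i j, G.Adj (Sum.inl i) (Sum.inr j) ↔ j ∈ e i)
    (hvv : ∀ i j : Fin v, ¬ G.Adj (Sum.inl i) (Sum.inl j))
    (hbb : ∀ i j : Fin b, ¬ G.Adj (Sum.inr i) (Sum.inr j)) :
    G.Preconnected ↔ H.Preconnected := by
  constructor
  · intro hc x y
    let f : Fin v ⊕ Fin b → Fin b := Sum.elim (fun i => (e i).out.1) id
    have key : ∀ i j, j ∈ e i → H.Reachable (e i).out.1 j := by
      intro i j hj
      by_cases hne : (e i).out.1 = j
      · rw [hne]
      · apply Adj.reachable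
        rw [← mem_edgeSet, ← hr]
        exact ⟨i, (Sym2.mem_and_mem_iff hne).1 ⟨Sym2.out_fst_mem _, hj⟩⟩
    have step : ∀ s t, G.Walk s t → H.Reachable (f s) (f t) := by
      intro s t w
      induction w with
      | nil => exact Reachable.refl _
      | @cons a c d h w ih =>
        refine Reachable.trans ?_ ih
        rcases a with a | a <;> rcases c with c | c
        · exact absurd h (hvv _ _)
        · exact key _ _ ((hG _ _).1 h)
        · exact (key _ _ ((hG _ _).1 h.symm)).symm
        · exact absurd h (hbb _ _)
    obtain ⟨w⟩ := hc (Sum.inr x) (Sum.inr y)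
    exact step _ _ w
  · intro hc
    have step : ∀ x y, H.Walk x y → G.Reachable (Sum.inr x) (Sum.inr y) := by
      intro x y w
      induction w with
      | nil => exact Reachable.refl _
      | @cons a c d h w ih =>
        refine Reachable.trans ?_ ih
        rw [← mem_edgeSet, ← hr] at h
        obtain ⟨i, hi⟩ := h
        have ha : G.Adj (Sum.inl i) (Sum.inr a) := by rw [hG, hi]; simp
        have hc : G.Adj (Sum.inl i) (Sum.inr c) := by rw [hG, hi]; simp
        exact ha.symm.reachable.trans hc.reachable
    have right : ∀ s, ∃ x, G.Reachable s (Sum.inr x) := by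
      rintro (i | x)
      · exact ⟨(e i).out.1, Adj.reachable ((hG _ _).2 (Sym2.out_fst_mem _))⟩
      · exact ⟨x, Reachable.refl _⟩
    intro s t
    obtain ⟨x, hx⟩ := right s
    obtain ⟨y, hy⟩ := right t
    obtain ⟨w⟩ := hc x y
    exact hx.trans ((step _ _ w).trans hy.symm)

/-- For `k ≥ 2` and positive `v, b`, a `(v,b,2,k)`-combinatorial configuration
exists iff there exists a connected `k`-regular simple graph with `b` vertices
and `v` edges. -/
theorem configurable_two_iff_regular_graph (k v b : ℕ) (hk : 2 ≤ k)
    (hv : 0 < v) (hb : 0 < b) :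
    Configurable v b 2 k ↔
      ∃ G : SimpleGraph (Fin b), G.Connected ∧
        (∀ x : Fin b, (G.neighborSet x).ncard = k) ∧ G.edgeSet.ncard = v := by
  constructor
  · rintro ⟨G, hvv, hbb, hc, h2, hkk, h4⟩
    have hex : ∀ i : Fin v, ∃ s : Sym2 (Fin b), ¬ s.IsDiag ∧
        ∀ j, G.Adj (Sum.inl i) (Sum.inr j) ↔ j ∈ s := by
      intro i
      obtain ⟨x, y, hxy, h⟩ := Set.ncard_eq_two.1 (h2 i)
      have hx : G.Adj (Sum.inl i) x := by rw [← mem_neighborSet, h]; simp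
      have hy : G.Adj (Sum.inl i) y := by rw [← mem_neighborSet, h]; simp
      rcases x with x | x
      · exact absurd hx (hvv _ _)
      rcases y with y | y
      · exact absurd hy (hvv _ _)
      refine ⟨s(x, y), by simpa using hxy, fun j => ?_⟩
      rw [← mem_neighborSet, h]
      simp
    choose e hd hG using hex
    have he : Function.Injective e := by
      intro i i' hii
      by_contra hne
      obtain ⟨p, q, hpq⟩ : ∃ p q, e i = s(p, q) := by
        induction h : e i with | _ p q => exact ⟨p, q, rfl⟩
      have hpne : p ≠ q := by
        have := hd i
        rw [hpq] at this
        simpa using this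
      have a1 : G.Adj (Sum.inl i) (Sum.inr p) := by rw [hG, hpq]; simp
      have a2 : G.Adj (Sum.inr p) (Sum.inl i') := by
        rw [G.adj_comm, hG, ← hii, hpq]; simp
      have a3 : G.Adj (Sum.inl i') (Sum.inr q) := by rw [hG, ← hii, hpq]; simp
      have a4 : G.Adj (Sum.inr q) (Sum.inl i) := by rw [G.adj_comm, hG, hpq]; simp
      refine h4 _ (.cons a1 (.cons a2 (.cons a3 (.cons a4 .nil)))) ?_ rfl
      rw [Walk.cons_isCycle_iff]
      simp [Walk.cons_isPath_iff, hpne, hpne.symm, hne, Ne.symm hne]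
    have hr : Set.range e = (fromEdgeSet (Set.range e)).edgeSet := by
      rw [edgeSet_fromEdgeSet]
      ext s
      simp only [Set.mem_diff]
      constructor
      · rintro ⟨i, rfl⟩
        exact ⟨⟨i, rfl⟩, hd i⟩
      · exact fun h => h.1
    refine ⟨fromEdgeSet (Set.range e), ?_, ?_, ?_⟩
    · haveI : Nonempty (Fin b) := ⟨⟨0, hb⟩⟩
      exact ⟨(aux_conn G _ e hr hG hvv hbb).1 hc⟩
    · intro x
      rw [aux_ncard G _ e he hr hG hbb, hkk]
    · rw [← hr, ← Set.image_univ, Set.ncard_image_of_injective _ he]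
      simp
  · rintro ⟨H, hc, hkk, hE⟩
    have eqv : Fin v ≃ H.edgeSet := by
      apply (Finite.equivFinOfCardEq _).symm
      rw [Nat.card_coe_set_eq, hE]
    let e : Fin v → Sym2 (Fin b) := fun i => (eqv i : Sym2 (Fin b))
    have he : Function.Injective e := fun i j h => eqv.injective (Subtype.ext h)
    have hr : Set.range e = H.edgeSet := by
      ext s
      constructor
      · rintro ⟨i, rfl⟩
        exact (eqv i).2
      · intro h
        exact ⟨eqv.symm ⟨s, h⟩, by simp [e]⟩
    let G : SimpleGraph (Fin v ⊕ Fin b) :=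
      { Adj := fun s t => match s, t with
          | .inl i, .inr j => j ∈ e i
          | .inr j, .inl i => j ∈ e i
          | .inl _, .inl _ => False
          | .inr _, .inr _ => False
        symm := ⟨by rintro (i | i) (j | j) h <;> exact h⟩
        loopless := ⟨by rintro (i | i) h <;> exact h⟩ }
    have hG : ∀ i j, G.Adj (Sum.inl i) (Sum.inr j) ↔ j ∈ e i := fun i j => Iff.rfl
    have hG' : ∀ i j, G.Adj (Sum.inr j) (Sum.inl i) ↔ j ∈ e i := fun i j => Iff.rfl
    have hvv : ∀ i j : Fin v, ¬ G.Adj (Sum.inl i) (Sum.inl j) := fun i j h => h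
    have hbb : ∀ i j : Fin b, ¬ G.Adj (Sum.inr i) (Sum.inr j) := fun i j h => h
    have uniq : ∀ i i' p q, p ≠ q → p ∈ e i → q ∈ e i → p ∈ e i' → q ∈ e i' → i = i' := by
      intro i i' p q hpq h1 h2 h3 h4
      apply he
      rw [(Sym2.mem_and_mem_iff hpq).1 ⟨h1, h2⟩, (Sym2.mem_and_mem_iff hpq).1 ⟨h3, h4⟩]
    refine ⟨G, hvv, hbb, (aux_conn G H e hr hG hvv hbb).2 hc.preconnected, ?_, ?_, ?_⟩
    · intro i
      obtain ⟨p, q, hpq⟩ : ∃ p q, e i = s(p, q) := by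
        induction h : e i with | _ p q => exact ⟨p, q, rfl⟩
      have hadj : H.Adj p q := by
        rw [← mem_edgeSet, ← hr, ← hpq]
        exact ⟨i, rfl⟩
      rw [Set.ncard_eq_two]
      refine ⟨Sum.inr p, Sum.inr q, by simpa using hadj.ne, ?_⟩
      ext s
      rcases s with j | j
      · simp [hvv]
      · simp [hG, hpq]
    · intro x
      rw [← aux_ncard G H e he hr hG hbb, hkk]
    · intro x c hcyc hlen
      match c, hcyc, hlen with
      | .cons (v := u1) a1 (.cons (v := u2) a2 (.cons (v := u3) a3 (.cons a4 .nil))), hcyc, _ =>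
        rw [Walk.cons_isCycle_iff] at hcyc
        have n1 : u1 ≠ u3 := by
          rintro rfl
          simp [Walk.cons_isPath_iff] at hcyc
        have n2 : x ≠ u2 := by
          rintro rfl
          simp [Walk.cons_isPath_iff] at hcyc
        rcases x with x | x <;> rcases u1 with u1 | u1 <;> rcases u2 with u2 | u2 <;>
          rcases u3 with u3 | u3 <;>
          first
          | exact hvv _ _ a1
          | exact hvv _ _ a2
          | exact hvv _ _ a3
          | exact hvv _ _ a4
          | exact hbb _ _ a1
          | exact hbb _ _ a2
          | exact hbb _ _ a3
          | exact hbb _ _ a4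
          | exact n2 (congrArg Sum.inl (uniq x u2 u1 u3 (fun h => n1 (congrArg _ h)) a1 a4 a2 a3))
          | exact n1 (congrArg Sum.inl (uniq u1 u3 x u2 (fun h => n2 (congrArg _ h)) a1 a2 a4 a3))
end

section
/- For every integer n ≥ 3 and every integer γ ≥ 3, there exists a finite n-regular simple graph whose girth is at least γ. -/
open SimpleGraph

namespace LargeGirth

/-- Reduced words of length at most `r` on `n` involutive letters. -/
abbrev Ball (n r : ℕ) : Type :=
  {l : List (Fin n) // l.length ≤ r ∧ l.IsChain (· ≠ ·)}

/-- Left multiplication by the letter `i`, truncated to words of length at most `r`. -/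
def step (n r : ℕ) (i : Fin n) : List (Fin n) → List (Fin n)
  | [] => if 0 < r then [i] else []
  | j :: t => if i = j then t else if t.length + 1 < r then i :: j :: t else j :: t

lemma step_mem (n r : ℕ) (i : Fin n) (l : List (Fin n))
    (h : l.length ≤ r ∧ l.IsChain (· ≠ ·)) :
    (step n r i l).length ≤ r ∧ (step n r i l).IsChain (· ≠ ·) := by
  obtain ⟨h1, h2⟩ := h
  cases l with
  | nil =>
    by_cases h : 0 < r
    · simp only [step, if_pos h]
      exact ⟨h, by simp⟩
    · simp [step, h]
  | cons j t =>
    have h1' : t.length + 1 ≤ r := h1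
    by_cases h : i = j
    · simp only [step, if_pos h]
      exact ⟨by omega, h2.tail⟩
    · by_cases h' : t.length + 1 < r
      · simp only [step, if_neg h, if_pos h']
        exact ⟨h', List.isChain_cons_cons.2 ⟨h, h2⟩⟩
      · simp only [step, if_neg h, if_neg h']
        exact ⟨h1, h2⟩

lemma step_step (n r : ℕ) (i : Fin n) (l : List (Fin n))
    (h : l.length ≤ r ∧ l.IsChain (· ≠ ·)) :
    step n r i (step n r i l) = l := by
  obtain ⟨h1, h2⟩ := h
  cases l with
  | nil =>
    by_cases h : 0 < r <;> simp [step, h]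
  | cons j t =>
    by_cases h : i = j
    · subst h
      cases t with
      | nil =>
        have : 0 < r := h1
        simp [step, this]
      | cons k t =>
        have h3 : i ≠ k := (List.isChain_cons_cons.1 h2).1
        have : t.length + 1 < r := by
          simp at h1
          omega
        simp [step, h3, this]
    · by_cases h' : t.length + 1 < r <;> simp [step, h, h']

/-- The permutation of the ball induced by the letter `i`. -/
def gen (n r : ℕ) (i : Fin n) : Equiv.Perm (Ball n r) where
  toFun l := ⟨step n r i l.1, step_mem n r i l.1 l.2⟩
  invFun l := ⟨step n r i l.1, step_mem n r i l.1 l.2⟩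
  left_inv l := Subtype.ext (step_step n r i l.1 l.2)
  right_inv l := Subtype.ext (step_step n r i l.1 l.2)

lemma gen_mul_gen (n r : ℕ) (i : Fin n) : gen n r i * gen n r i = 1 := by
  ext1 l
  exact Subtype.ext (step_step n r i l.1 l.2)

/-- The empty word. -/
def root (n r : ℕ) : Ball n r := ⟨[], by simp⟩

lemma prod_root (n r : ℕ) (l : List (Fin n)) (hl : l.length ≤ r)
    (hc : l.IsChain (· ≠ ·)) :
    ((l.map (gen n r)).prod (root n r)).1 = l := by
  induction l with
  | nil => rfl
  | cons i t ih =>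
    have ht := ih (by simp at hl; omega) hc.tail
    rw [List.map_cons, List.prod_cons, Equiv.Perm.mul_apply]
    change step n r i _ = _
    rw [ht]
    cases t with
    | nil =>
      have : 0 < r := hl
      simp [step, this]
    | cons k t =>
      have h3 : i ≠ k := (List.isChain_cons_cons.1 hc).1
      have : t.length + 1 < r := by
        simp at hl
        omega
      simp [step, h3, this]

lemma gen_root (n r : ℕ) (hr : 0 < r) (i : Fin n) : (gen n r i (root n r)).1 = [i] := by
  simpa using prod_root n r [i] hr (by simp)

lemma gen_injective (n r : ℕ) (hr : 0 < r) : Function.Injective (gen n r) := by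
  intro i j h
  have h1 := gen_root n r hr i
  rw [h, gen_root n r hr j] at h1
  simpa using h1.symm

lemma gen_ne_one (n r : ℕ) (hr : 0 < r) (i : Fin n) : gen n r i ≠ 1 := by
  intro h
  have h1 := gen_root n r hr i
  rw [h] at h1
  simp [root] at h1

/-- The Cayley graph of the permutation group of the ball with respect to the letters. -/
def cay (n r : ℕ) (hr : 0 < r) : SimpleGraph (Equiv.Perm (Ball n r)) where
  Adj x y := ∃ i, y = x * gen n r i
  symm := ⟨by
    rintro x y ⟨i, rfl⟩
    exact ⟨i, by rw [mul_assoc, gen_mul_gen, mul_one]⟩⟩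
  loopless := ⟨by
    rintro x ⟨i, h⟩
    exact gen_ne_one n r hr i (by simpa using h.symm)⟩

lemma cay_ncard (n r : ℕ) (hr : 0 < r) (x : Equiv.Perm (Ball n r)) :
    ((cay n r hr).neighborSet x).ncard = n := by
  have h : (cay n r hr).neighborSet x = Set.range (fun i => x * gen n r i) := by
    ext y
    simp [SimpleGraph.mem_neighborSet, cay, eq_comm]
  rw [h, Set.ncard_range_of_injective]
  · simp
  · intro i j hij
    exact gen_injective n r hr (mul_left_cancel hij)

lemma trail_word (n r : ℕ) (hr : 0 < r) {x y : Equiv.Perm (Ball n r)}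
    (p : (cay n r hr).Walk x y) (hp : p.IsTrail) :
    ∃ l : List (Fin n), l.length = p.length ∧ l.IsChain (· ≠ ·) ∧
      y = x * (l.map (gen n r)).prod ∧
      ∀ i ∈ l.head?, s(x, x * gen n r i) ∈ p.edges := by
  induction p with
  | nil => exact ⟨[], by simp⟩
  | @cons u v w h p ih =>
    rw [SimpleGraph.Walk.isTrail_cons] at hp
    obtain ⟨l, h1, h2, h3, h4⟩ := ih hp.1
    obtain ⟨i, hi⟩ := id h
    refine ⟨i :: l, by simp [h1], ?_, ?_, ?_⟩
    · rw [List.isChain_cons]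
      refine ⟨?_, h2⟩
      rintro j hj rfl
      apply hp.2
      have := h4 i hj
      have hv : v * gen n r i = u := by rw [hi, mul_assoc, gen_mul_gen, mul_one]
      rwa [hv, Sym2.eq_swap] at this
    · rw [h3, hi]
      simp [mul_assoc]
    · intro j hj
      have : i = j := by simpa using hj
      subst this
      simp [hi]

lemma cycle_length (n r : ℕ) (hr : 0 < r) {x : Equiv.Perm (Ball n r)}
    (p : (cay n r hr).Walk x x) (hp : p.IsCycle) : r < p.length := by
  by_contra hlt
  obtain ⟨l, h1, h2, h3, -⟩ := trail_word n r hr p hp.isTrail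
  have h4 : (l.map (gen n r)).prod = 1 := by simpa using h3.symm
  have h5 := prod_root n r l (by omega) h2
  rw [h4] at h5
  have h6 : l = [] := by simpa [root] using h5.symm
  have := hp.three_le_length
  simp [h6] at h1
  omega

lemma not_acyclic {V : Type} [Fintype V] [Nonempty V] (G : SimpleGraph V)
    (h : ∀ x, 2 ≤ (G.neighborSet x).ncard) : ¬ G.IsAcyclic := by
  intro hG
  have key : ∀ k : ℕ, ∃ (u v : V) (p : G.Walk u v), p.IsPath ∧ p.length = k := by
    intro k
    induction k with
    | zero =>
      obtain ⟨x⟩ := ‹Nonempty V›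
      exact ⟨x, x, .nil, by simp⟩
    | succ k ih =>
      obtain ⟨u, v, p, hp, hk⟩ := ih
      obtain ⟨w, hw, hne⟩ := Set.exists_ne_of_one_lt_ncard (h u) p.snd
      have hw' : G.Adj u w := hw
      refine ⟨w, v, .cons hw'.symm p, ?_, by simp [hk]⟩
      rw [SimpleGraph.Walk.cons_isPath_iff]
      refine ⟨hp, fun hmem => hne ?_⟩
      exact hG.eq_snd_of_adj_start hp hw' hmem
  obtain ⟨u, v, p, hp, hk⟩ := key (Fintype.card V)
  have := hp.length_lt
  omega

end LargeGirth

/-- For every `n ≥ 3` and every `γ ≥ 3` there exists a finite `n`-regular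
simple graph whose girth is at least `γ`. -/
theorem exists_regular_graph_of_large_girth (n γ : ℕ) (hn : 3 ≤ n) (hγ : 3 ≤ γ) :
    ∃ (V : Type) (_ : Fintype V) (_ : Nonempty V) (G : SimpleGraph V),
      (∀ x : V, (G.neighborSet x).ncard = n) ∧ (γ : ℕ∞) ≤ G.girth := by
  classical
  have hr : 0 < γ := by omega
  have : Finite (LargeGirth.Ball n γ) :=
    ((List.finite_length_le (Fin n) γ).subset (fun l hl => hl.1)).to_subtype
  have : Fintype (LargeGirth.Ball n γ) := Fintype.ofFinite _
  refine ⟨Equiv.Perm (LargeGirth.Ball n γ), inferInstance, ⟨1⟩, LargeGirth.cay n γ hr,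
    LargeGirth.cay_ncard n γ hr, ?_⟩
  have hac : ¬ (LargeGirth.cay n γ hr).IsAcyclic :=
    LargeGirth.not_acyclic _ (fun x => by rw [LargeGirth.cay_ncard]; omega)
  obtain ⟨x, p, hp, hg⟩ := SimpleGraph.exists_girth_eq_length.2 hac
  rw [hg]
  exact_mod_cast (LargeGirth.cycle_length n γ hr p hp).le
end

section
/- For every pair of positive integers r, k, there exists a positive integer d in D_{r,k}; that is, there is a nonzero d such that the tuple (d·k/gcd(r,k), d·r/gcd(r,k), r, k) is configurable. -/
open SimpleGraph

/-- The incidence graph of a relation. -/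
def incGraph {L R : Type} (I : L → R → Prop) : SimpleGraph (L ⊕ R) where
  Adj x y := match x, y with
    | Sum.inl a, Sum.inr b => I a b
    | Sum.inr b, Sum.inl a => I a b
    | _, _ => False
  symm := ⟨by rintro (a | a) (b | b) h <;> exact h⟩
  loopless := ⟨by rintro (a | a) h <;> exact h⟩

theorem no_four_cycle {V : Type} (G : SimpleGraph V)
    (h : ∀ a b c d, G.Adj a b → G.Adj b c → G.Adj c d → G.Adj d a → a = c ∨ b = d)
    (x : V) (w : G.Walk x x) (hw : w.IsCycle) : w.length ≠ 4 := by
  intro hl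
  cases w with
  | nil => simp at hl
  | cons h1 w =>
  cases w with
  | nil => simp at hl
  | cons h2 w =>
  cases w with
  | nil => simp at hl
  | cons h3 w =>
  cases w with
  | nil => simp at hl
  | cons h4 w =>
  cases w with
  | cons h5 w => simp at hl
  | nil =>
    have hn := hw.support_nodup
    simp at hn
    rcases h _ _ _ _ h1 h2 h3 h4 with e | e
    · subst e; simp_all
    · subst e; simp_all

theorem configurable_of_rel {L R : Type} (I : L → R → Prop) {v b r k : ℕ}
    (eL : Fin v ≃ L) (eR : Fin b ≃ R)
    (hL : ∀ a, {b | I a b}.ncard = r) (hR : ∀ b, {a | I a b}.ncard = k)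
    (hI : ∀ a a' b b', I a b → I a' b → I a b' → I a' b' → a = a' ∨ b = b')
    (hc : (incGraph I).Preconnected) : Configurable v b r k := by
  let e : Fin v ⊕ Fin b ≃ L ⊕ R := Equiv.sumCongr eL eR
  refine ⟨(incGraph I).comap e, ?_, ?_, ?_, ?_, ?_, ?_⟩
  · intro i j h; exact h
  · intro i j h; exact h
  · exact (SimpleGraph.Iso.preconnected_iff (SimpleGraph.Iso.comap e (incGraph I))).2 hc
  · intro i
    rw [← hL (eL i)]
    have : ((incGraph I).comap e).neighborSet (Sum.inl i)
        = (fun b => Sum.inr (eR.symm b)) '' {b | I (eL i) b} := by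
      ext (y | y)
      · simp [incGraph, e]
      · simp only [SimpleGraph.mem_neighborSet, Set.mem_image, Set.mem_setOf_eq]
        constructor
        · intro h; exact ⟨eR y, h, by simp⟩
        · rintro ⟨z, hz, hzy⟩
          have : z = eR y := by
            rw [← Sum.inr.inj hzy]; simp
          subst this; exact hz
    rw [this, Set.ncard_image_of_injective]
    intro x y h
    exact eR.symm.injective (Sum.inr.inj h)
  · intro i
    rw [← hR (eR i)]
    have : ((incGraph I).comap e).neighborSet (Sum.inr i)
        = (fun b => Sum.inl (eL.symm b)) '' {a | I a (eR i)} := by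
      ext (y | y)
      · simp only [SimpleGraph.mem_neighborSet, Set.mem_image, Set.mem_setOf_eq]
        constructor
        · intro h; exact ⟨eL y, h, by simp⟩
        · rintro ⟨z, hz, hzy⟩
          have : z = eL y := by
            rw [← Sum.inl.inj hzy]; simp
          subst this; exact hz
      · simp [incGraph, e]
    rw [this, Set.ncard_image_of_injective]
    intro x y h
    exact eL.symm.injective (Sum.inl.inj h)
  · apply no_four_cycle
    rintro (a | a) (b | b) (c | c) (d | d) h1 h2 h3 h4 <;> try contradiction
    · rcases hI (eL a) (eL c) (eR b) (eR d) h1 h2 h4 h3 with h | h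
      · left; rw [eL.injective h]
      · right; rw [eR.injective h]
    · rcases hI (eL b) (eL d) (eR a) (eR c) h1 h4 h2 h3 with h | h
      · right; rw [eL.injective h]
      · left; rw [eR.injective h]

/-- The incidence relation `y = x + a c` on `(Fin k × ZMod n) × (Fin r × ZMod n)`. -/
def rel (r k n : ℕ) (p : Fin k × ZMod n) (q : Fin r × ZMod n) : Prop :=
  q.2 = p.2 + (p.1.val : ZMod n) * (q.1.val : ZMod n)

theorem configurable_aux (r k n : ℕ) [NeZero n] (hr : 0 < r) (hk : 0 < k)
    (h1 : ∀ (a a' : Fin k) (c c' : Fin r),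
      ((a.val : ZMod n) - a'.val) * ((c.val : ZMod n) - c'.val) = 0 → a = a' ∨ c = c')
    (h2 : n = 1 ∨ (2 ≤ r ∧ 2 ≤ k)) : Configurable (n * k) (n * r) r k := by
  have eL : Fin (n * k) ≃ Fin k × ZMod n :=
    (Fintype.equivFinOfCardEq (by simp [ZMod.card, mul_comm])).symm
  have eR : Fin (n * r) ≃ Fin r × ZMod n :=
    (Fintype.equivFinOfCardEq (by simp [ZMod.card, mul_comm])).symm
  refine configurable_of_rel (rel r k n) eL eR ?_ ?_ ?_ ?_
  · rintro ⟨a, x⟩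
    have : {q | rel r k n (a, x) q}
        = (fun c : Fin r => (c, x + (a.val : ZMod n) * (c.val : ZMod n))) '' Set.univ := by
      ext ⟨c, y⟩
      simp [rel, eq_comm]
    rw [this, Set.ncard_image_of_injective]
    · simp [Set.ncard_univ]
    · intro c c' h; exact congrArg Prod.fst h
  · rintro ⟨c, y⟩
    have : {p | rel r k n p (c, y)}
        = (fun a : Fin k => (a, y - (a.val : ZMod n) * (c.val : ZMod n))) '' Set.univ := by
      ext ⟨a, x⟩
      simp [rel, sub_eq_iff_eq_add]
    rw [this, Set.ncard_image_of_injective]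
    · simp [Set.ncard_univ]
    · intro c c' h; exact congrArg Prod.fst h
  · rintro ⟨a, x⟩ ⟨a', x'⟩ ⟨c, y⟩ ⟨c', y'⟩ e1 e2 e3 e4
    simp only [rel] at e1 e2 e3 e4
    rcases h1 a a' c c' (by linear_combination e2 + e3 - e1 - e4) with h | h
    · subst h; left
      rw [Prod.mk.injEq]; exact ⟨rfl, by linear_combination e2 - e1⟩
    · subst h; right
      rw [Prod.mk.injEq]; exact ⟨rfl, by linear_combination e1 - e3⟩
  · set G := incGraph (rel r k n) with hG
    have adj : ∀ p q, rel r k n p q → G.Reachable (Sum.inl p) (Sum.inr q) := by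
      intro p q h
      exact SimpleGraph.Adj.reachable (show G.Adj _ _ from h)
    have hstep : ∀ x : ZMod n,
        G.Reachable (Sum.inl (⟨0, hk⟩, x)) (Sum.inl (⟨0, hk⟩, x + 1)) := by
      intro x
      rcases h2 with h | ⟨hr2, hk2⟩
      · subst h
        rw [Subsingleton.elim (x + 1) x]
      · have s1 := adj (⟨0, hk⟩, x) (⟨0, hr⟩, x) (by simp [rel])
        have s2 := adj (⟨1, hk2⟩, x) (⟨0, hr⟩, x) (by simp [rel])
        have s3 := adj (⟨1, hk2⟩, x) (⟨1, hr2⟩, x + 1) (by simp [rel])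
        have s4 := adj (⟨0, hk⟩, x + 1) (⟨1, hr2⟩, x + 1) (by simp [rel])
        exact ((s1.trans s2.symm).trans s3).trans s4.symm
    have hnat : ∀ m : ℕ, G.Reachable (Sum.inl (⟨0, hk⟩, 0)) (Sum.inl (⟨0, hk⟩, (m : ZMod n))) := by
      intro m
      induction m with
      | zero => simp
      | succ m ih => push_cast; exact ih.trans (hstep _)
    have hz : ∀ x : ZMod n, G.Reachable (Sum.inl (⟨0, hk⟩, 0)) (Sum.inl (⟨0, hk⟩, x)) := by
      intro x
      have := hnat x.val
      rwa [ZMod.natCast_zmod_val] at this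
    have hall : ∀ u, G.Reachable (Sum.inl (⟨0, hk⟩, 0)) u := by
      rintro (⟨a, x⟩ | ⟨c, y⟩)
      · have s1 := adj (⟨0, hk⟩, x) (⟨0, hr⟩, x) (by simp [rel])
        have s2 := adj (a, x) (⟨0, hr⟩, x) (by simp [rel])
        exact ((hz x).trans s1).trans s2.symm
      · exact (hz y).trans (adj (⟨0, hk⟩, y) (c, y) (by simp [rel]))
    intro u w
    exact (hall u).symm.trans (hall w)

/-- For every pair of positive integers `r, k` there exists a positive `d`
in `D r k`. -/
theorem exists_pos_mem_D (r k : ℕ) (hr : 0 < r) (hk : 0 < k) :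
    ∃ d : ℕ, 0 < d ∧ d ∈ D r k := by
  have key : ∃ n : ℕ, 0 < n ∧ Configurable (n * k) (n * r) r k := by
    by_cases h : 2 ≤ r ∧ 2 ≤ k
    · have hpos : 0 < r * k := Nat.mul_pos hr hk
      haveI : NeZero (r * k) := ⟨hpos.ne'⟩
      refine ⟨r * k, hpos, configurable_aux r k (r * k) hr hk ?_ (Or.inr h)⟩
      intro a a' c c' e
      have e' : (((((a.val : ℤ) - a'.val) * ((c.val : ℤ) - c'.val) : ℤ)) : ZMod (r * k)) = 0 := by
        push_cast; exact_mod_cast e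
      rw [ZMod.intCast_zmod_eq_zero_iff_dvd] at e'
      have ha : |(a.val : ℤ) - a'.val| < k := by
        rw [abs_lt]; have := a.2; have := a'.2; constructor <;> omega
      have hc : |(c.val : ℤ) - c'.val| < r := by
        rw [abs_lt]; have := c.2; have := c'.2; constructor <;> omega
      have hlt : |((a.val : ℤ) - a'.val) * ((c.val : ℤ) - c'.val)| < ((r * k : ℕ) : ℤ) := by
        rw [abs_mul]; push_cast
        rw [mul_comm (r : ℤ)]
        exact mul_lt_mul'' ha hc (abs_nonneg _) (abs_nonneg _)
      rcases mul_eq_zero.1 (Int.eq_zero_of_abs_lt_dvd e' hlt) with h0 | h0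
      · left; apply Fin.ext; omega
      · right; apply Fin.ext; omega
    · refine ⟨1, one_pos, configurable_aux r k 1 hr hk ?_ (Or.inl rfl)⟩
      intro a a' c c' _
      have := a.2; have := a'.2; have := c.2; have := c'.2
      by_cases hr1 : r = 1
      · right; apply Fin.ext; omega
      · left; apply Fin.ext; omega
  obtain ⟨n, hn, hc⟩ := key
  have hg : 0 < Nat.gcd r k := Nat.gcd_pos_of_pos_left _ hr
  refine ⟨n * Nat.gcd r k, Nat.mul_pos hn hg, ?_⟩
  show Configurable _ _ r k
  have e : ∀ m, n * Nat.gcd r k * m / Nat.gcd r k = n * m := by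
    intro m
    rw [mul_right_comm, Nat.mul_div_cancel _ hg]
  rw [e, e]
  exact hc
end

section
/- In any (v,b,r,k)-combinatorial configuration with r ≥ 2 and k ≥ 2 (and nonempty), there exist three edges whose six endpoints are pairwise distinct, i.e., the graph contains a matching of size 3. -/
open SimpleGraph

/-- Any nonempty `(v,b,r,k)`-combinatorial configuration with `r, k ≥ 2`
contains three edges whose six endpoints are pairwise distinct. -/
theorem configuration_exists_matching_three (v b r k : ℕ) (hr : 2 ≤ r) (hk : 2 ≤ k)
    (hv : 0 < v) (G : SimpleGraph (Fin v ⊕ Fin b)) (hG : IsConfiguration v b r k G) :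
    ∃ u₁ w₁ u₂ w₂ u₃ w₃ : Fin v ⊕ Fin b,
      G.Adj u₁ w₁ ∧ G.Adj u₂ w₂ ∧ G.Adj u₃ w₃ ∧
      [u₁, w₁, u₂, w₂, u₃, w₃].Pairwise (· ≠ ·) := by
  obtain ⟨hl, hrr, -, hdl, hdr, hc⟩ := hG
  have nb : ∀ x y : Fin v ⊕ Fin b, ∃ z, G.Adj x z ∧ z ≠ y := by
    intro x y
    have h1 : 1 < (G.neighborSet x).ncard := by
      rcases x with i | j
      · rw [hdl]; omega
      · rw [hdr]; omega
    obtain ⟨z, hz, hzy⟩ := Set.exists_ne_of_one_lt_ncard h1 y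
    exact ⟨z, hz, hzy⟩
  have bip : ∀ x y : Fin v ⊕ Fin b, G.Adj x y → x.isLeft = !y.isLeft := by
    rintro (i | i) (j | j) h
    · exact absurd h (hl _ _)
    · rfl
    · rfl
    · exact absurd h (hrr _ _)
  have c4 : ∀ p q s t : Fin v ⊕ Fin b, G.Adj p q → G.Adj q s → G.Adj s t → G.Adj t p →
      p ≠ s → q ≠ t → False := by
    intro p q s t h1 h2 h3 h4 hps hqt
    refine hc p (.cons h1 (.cons h2 (.cons h3 (.cons h4 .nil)))) ?_ rfl
    rw [Walk.cons_isCycle_iff]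
    have e1 := h1.ne
    have e2 := h2.ne
    have e3 := h3.ne
    have e4 := h4.ne
    constructor
    · simp [Walk.isPath_def]
      grind
    · simp
      grind
  let i : Fin v ⊕ Fin b := Sum.inl ⟨0, hv⟩
  obtain ⟨j1, a1, -⟩ := nb i i
  obtain ⟨j2, a2, n2⟩ := nb i j1
  obtain ⟨i1, a3, n3⟩ := nb j1 i
  obtain ⟨i2, a4, n4⟩ := nb j2 i
  obtain ⟨j3, a5, n5⟩ := nb i1 j1
  have m1 : i1 ≠ i2 := by
    rintro rfl
    exact c4 i j1 i1 j2 a1 a3 a4.symm a2.symm n3.symm n2.symm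
  have m2 : j3 ≠ j2 := by
    rintro rfl
    exact c4 i j1 i1 j3 a1 a3 a5 a2.symm n3.symm n2.symm
  have b1 := bip _ _ a1
  have b2 := bip _ _ a2
  have b3 := bip _ _ a3
  have b4 := bip _ _ a4
  have b5 := bip _ _ a5
  refine ⟨i1, j3, i, j1, i2, j2, a5, a1, a4.symm, ?_⟩
  clear_value i
  clear c4 bip nb hc hl hrr hdl hdr a1 a2 a3 a4 a5
  have ne : ∀ x y : Fin v ⊕ Fin b, x.isLeft = (!y.isLeft) → x ≠ y := by
    rintro x _ h rfl
    cases x <;> simp at h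
  have q1 : i1 ≠ j3 := ne _ _ (by simp_all)
  have q2 : i1 ≠ j1 := ne _ _ (by simp_all)
  have q3 : i1 ≠ j2 := ne _ _ (by simp_all)
  have q4 : i ≠ j3 := ne _ _ (by simp_all)
  have q5 : i ≠ j1 := ne _ _ (by simp_all)
  have q6 : i ≠ j2 := ne _ _ (by simp_all)
  have q7 : i2 ≠ j3 := ne _ _ (by simp_all)
  have q8 : i2 ≠ j1 := ne _ _ (by simp_all)
  have q9 : i2 ≠ j2 := ne _ _ (by simp_all)
  clear ne b1 b2 b3 b4 b5
  simp [q1, q2, q3, q4.symm, q5, q6, q7.symm, q8.symm, q9, n3, n4.symm, m1, m2, n5, n2.symm]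
end

section
/- Any (v,b,r,k)-combinatorial configuration with r ≥ 2 and k ≥ 2 (and nonempty) contains a path with five edges all of whose six vertices are distinct. -/
open SimpleGraph

/-- Any nonempty `(v,b,r,k)`-combinatorial configuration with `r, k ≥ 2`
contains a path with five edges, all of whose six vertices are distinct. -/
theorem configuration_exists_path_five (v b r k : ℕ) (hr : 2 ≤ r) (hk : 2 ≤ k)
    (hv : 0 < v) (G : SimpleGraph (Fin v ⊕ Fin b)) (hG : IsConfiguration v b r k G) :
    ∃ (x y : Fin v ⊕ Fin b) (p : G.Walk x y), p.IsPath ∧ p.length = 5 := by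
  obtain ⟨hl, hrr, -, hdl, hdr, hc⟩ := hG
  have col : ∀ x y, G.Adj x y → x.isLeft = !y.isLeft := by
    rintro (x | x) (y | y) h
    · exact (hl _ _ h).elim
    · rfl
    · rfl
    · exact (hrr _ _ h).elim
  have two : ∀ x, 1 < (G.neighborSet x).ncard := by
    rintro (x | x)
    · rw [hdl]; omega
    · rw [hdr]; omega
  have nxt : ∀ x y, ∃ z, G.Adj x z ∧ z ≠ y := by
    intro x y
    obtain ⟨z, hz, hzy⟩ := Set.exists_ne_of_one_lt_ncard (two x) y
    exact ⟨z, hz, hzy⟩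
  have c4 : ∀ a b c d, G.Adj a b → G.Adj b c → G.Adj c d → G.Adj d a →
      c ≠ a → d ≠ b → False := by
    intro a b c d h1 h2 h3 h4 hca hdb
    refine hc a (.cons h1 (.cons h2 (.cons h3 (.cons h4 .nil)))) ?_ rfl
    have := h1.ne
    have := h2.ne
    have := h3.ne
    have := h4.ne
    rw [Walk.cons_isCycle_iff]
    simp [Walk.cons_isPath_iff]
    grind
  obtain ⟨x0, -⟩ : ∃ x : Fin v ⊕ Fin b, x = x := ⟨Sum.inl ⟨0, hv⟩, rfl⟩
  obtain ⟨x1, a1, -⟩ := nxt x0 x0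
  obtain ⟨x2, a2, n2⟩ := nxt x1 x0
  obtain ⟨x3, a3, n3⟩ := nxt x2 x1
  obtain ⟨x4, a4, n4⟩ := nxt x3 x2
  obtain ⟨x5, a5, n5⟩ := nxt x4 x3
  have e1 : x4 ≠ x0 := by
    rintro rfl
    exact c4 _ _ _ _ a1 a2 a3 a4 n2 n3
  have e2 : x5 ≠ x1 := by
    rintro rfl
    exact c4 _ _ _ _ a2 a3 a4 a5 n3 n4
  have k1 := col _ _ a1
  have k2 := col _ _ a2
  have k3 := col _ _ a3
  have k4 := col _ _ a4
  have k5 := col _ _ a5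
  refine ⟨x0, x5, .cons a1 (.cons a2 (.cons a3 (.cons a4 (.cons a5 .nil)))), ?_, rfl⟩
  have d1 := a1.ne
  have d2 := a2.ne
  have d3 := a3.ne
  have d4 := a4.ne
  have d5 := a5.ne
  have f1 : x0 ≠ x3 := by
    rintro rfl
    clear * - k1 k2 k3 k4 k5
    grind
  have f2 : x1 ≠ x4 := by
    rintro rfl
    clear * - k1 k2 k3 k4 k5
    grind
  have f3 : x2 ≠ x5 := by
    rintro rfl
    clear * - k1 k2 k3 k4 k5
    grind
  have f4 : x0 ≠ x5 := by
    rintro rfl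
    clear * - k1 k2 k3 k4 k5
    grind
  simp [Walk.cons_isPath_iff]
  grind
end

section
/- For all integers r ≥ 2 and k ≥ 2, the set D_{r,k} is a numerical semigroup: it contains 0, it is closed under addition, and its complement in ℕ is finite. -/
open SimpleGraph

set_option linter.unusedSectionVars false

namespace Cfg

open Finset

variable {α β : Type} [Fintype α] [Fintype β] [DecidableEq α] [DecidableEq β]

/-- Biregularity of an edge set. -/
def BR (r k : ℕ) (E : Finset (α × β)) : Prop :=
  (∀ a, (E.filter (fun p => p.1 = a)).card = r) ∧
  (∀ b, (E.filter (fun p => p.2 = b)).card = k)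

/-- `a` and `b` are joined by a walk of length three. -/
def T (E : Finset (α × β)) (a : α) (b : β) : Prop :=
  ∃ i j, (a, j) ∈ E ∧ (i, j) ∈ E ∧ (i, b) ∈ E

/-- A quadrilateral. -/
def Q (E : Finset (α × β)) (i i' : α) (j j' : β) : Prop :=
  i ≠ i' ∧ j ≠ j' ∧ (i, j) ∈ E ∧ (i', j) ∈ E ∧ (i, j') ∈ E ∧ (i', j') ∈ E

def QuadFree (E : Finset (α × β)) : Prop := ∀ i₁ i₂ j₁ j₂, ¬ Q E i₁ i₂ j₁ j₂

/-- The switched edge set. -/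
def sw (E : Finset (α × β)) (a a' : α) (b b' : β) : Finset (α × β) :=
  insert (a, b') (insert (a', b) ((E.erase (a, b)).erase (a', b')))

lemma mem_sw {E : Finset (α × β)} {a a' : α} {b b' : β} {x : α} {y : β} :
    (x, y) ∈ sw E a a' b b' ↔ (x = a ∧ y = b') ∨ (x = a' ∧ y = b) ∨
      (¬ (x = a' ∧ y = b') ∧ ¬ (x = a ∧ y = b) ∧ (x, y) ∈ E) := by
  simp [sw]

lemma basic {E : Finset (α × β)} {a a' : α} {b b' : β}
    (h : (a, b) ∈ E) (h' : (a', b') ∈ E) (t : ¬ T E a b') (t' : ¬ T E a' b) :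
    (a, b') ∉ E ∧ (a', b) ∉ E ∧ a ≠ a' ∧ b ≠ b' := by
  have h1 : (a, b') ∉ E := fun hh => t ⟨a, b', hh, hh, hh⟩
  have h2 : (a', b) ∉ E := fun hh => t' ⟨a', b, hh, hh, hh⟩
  refine ⟨h1, h2, ?_, ?_⟩
  · rintro rfl; exact h1 h'
  · rintro rfl; exact h1 h

lemma sw_BR {r k : ℕ} {E : Finset (α × β)} {a a' : α} {b b' : β} (hE : BR r k E)
    (h : (a, b) ∈ E) (h' : (a', b') ∈ E) (t : ¬ T E a b') (t' : ¬ T E a' b) :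
    BR r k (sw E a a' b b') := by
  obtain ⟨n1, n2, ha, hb⟩ := basic h h' t t'
  constructor
  · intro x
    rw [← hE.1 x]
    unfold sw
    rw [filter_insert, filter_insert, filter_erase, filter_erase]
    by_cases hx : x = a
    · subst hx
      rw [if_pos rfl, if_neg (fun e => ha e.symm)]
      rw [card_insert_of_notMem (by simp [n1]), erase_eq_of_notMem (a := (a', b')) (by
        simp [Ne.symm ha])]
      rw [card_erase_add_one (by simp [h])]
    · by_cases hx' : x = a'
      · subst hx'
        rw [if_neg ha, if_pos rfl]
        rw [card_insert_of_notMem (by simp [n2]), erase_eq_of_notMem (a := (a, b)) (by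
          simp [ha])]
        rw [card_erase_add_one (by simp [h'])]
      · rw [if_neg (fun e => hx e.symm), if_neg (fun e => hx' e.symm)]
        rw [erase_eq_of_notMem (a := (a, b)) (by simp [Ne.symm hx]),
          erase_eq_of_notMem (by simp [Ne.symm hx'])]
  · intro y
    rw [← hE.2 y]
    unfold sw
    rw [filter_insert, filter_insert, filter_erase, filter_erase]
    by_cases hy : y = b
    · subst hy
      rw [if_neg (fun e => hb e.symm), if_pos rfl]
      rw [card_insert_of_notMem (by simp [n2]), erase_eq_of_notMem (a := (a', b')) (by
        simp [Ne.symm hb])]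
      rw [card_erase_add_one (by simp [h])]
    · by_cases hy' : y = b'
      · subst hy'
        rw [if_pos rfl, if_neg hb]
        rw [card_insert_of_notMem (by simp [n1]), erase_eq_of_notMem (a := (a, b)) (by
          simp [hb])]
        rw [card_erase_add_one (by simp [h'])]
      · rw [if_neg (fun e => hy' e.symm), if_neg (fun e => hy e.symm)]
        rw [erase_eq_of_notMem (a := (a, b)) (by simp [Ne.symm hy]),
          erase_eq_of_notMem (by simp [Ne.symm hy'])]

lemma sw_aux {E : Finset (α × β)} {a a' : α} {b b' : β}
    (h : (a, b) ∈ E) (h' : (a', b') ∈ E) (t : ¬ T E a b') (t' : ¬ T E a' b)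
    {i i' : α} {j j' : β} (q : Q (sw E a a' b b') i i' j j') : (i, j) ∈ E := by
  obtain ⟨n1, n2, ha, hb⟩ := basic h h' t t'
  obtain ⟨hi, hj, h1, h2, h3, h4⟩ := q
  rw [mem_sw] at h1 h2 h3 h4
  rcases h1 with ⟨rfl, rfl⟩ | ⟨rfl, rfl⟩ | h1
  · exfalso; apply t; refine ⟨i', j', ?_, ?_, ?_⟩ <;> grind
  · exfalso; apply t'; refine ⟨i', j', ?_, ?_, ?_⟩ <;> grind
  · exact h1.2.2

lemma sw_Q {E : Finset (α × β)} {a a' : α} {b b' : β}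
    (h : (a, b) ∈ E) (h' : (a', b') ∈ E) (t : ¬ T E a b') (t' : ¬ T E a' b)
    {i i' : α} {j j' : β} (q : Q (sw E a a' b b') i i' j j') : Q E i i' j j' := by
  obtain ⟨hi, hj, h1, h2, h3, h4⟩ := q
  exact ⟨hi, hj, sw_aux h h' t t' ⟨hi, hj, h1, h2, h3, h4⟩,
    sw_aux h h' t t' ⟨hi.symm, hj, h2, h1, h4, h3⟩,
    sw_aux h h' t t' ⟨hi, hj.symm, h3, h4, h1, h2⟩,
    sw_aux h h' t t' ⟨hi.symm, hj.symm, h4, h3, h2, h1⟩⟩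

/-- Counting the edges close to a given edge. -/
lemma exists_far {r k : ℕ} {E : Finset (α × β)} (hE : BR r k E)
    (hc : 2 * (r * k * r * k) < E.card) (a : α) (b : β) :
    ∃ a' b', (a', b') ∈ E ∧ ¬ T E a b' ∧ ¬ T E a' b := by
  classical
  by_contra hcon
  push Not at hcon
  let row (x : α) := E.filter (fun p => p.1 = x)
  let col (y : β) := E.filter (fun p => p.2 = y)
  let S1 := (((row a).biUnion (fun p => col p.2)).biUnion (fun p => row p.1)).biUnion
    (fun p => col p.2)
  let S2 := (((col b).biUnion (fun p => row p.1)).biUnion (fun p => col p.2)).biUnion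
    (fun p => row p.1)
  have c1 : S1.card ≤ r * k * r * k := by
    refine card_biUnion_le_card_mul _ _ _ (fun p _ => (hE.2 _).le) |>.trans ?_
    refine Nat.mul_le_mul_right _ ?_
    refine card_biUnion_le_card_mul _ _ _ (fun p _ => (hE.1 _).le) |>.trans ?_
    refine Nat.mul_le_mul_right _ ?_
    refine card_biUnion_le_card_mul _ _ _ (fun p _ => (hE.2 _).le) |>.trans ?_
    refine Nat.mul_le_mul_right _ (hE.1 _).le
  have c2 : S2.card ≤ k * r * k * r := by
    refine card_biUnion_le_card_mul _ _ _ (fun p _ => (hE.1 _).le) |>.trans ?_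
    refine Nat.mul_le_mul_right _ ?_
    refine card_biUnion_le_card_mul _ _ _ (fun p _ => (hE.2 _).le) |>.trans ?_
    refine Nat.mul_le_mul_right _ ?_
    refine card_biUnion_le_card_mul _ _ _ (fun p _ => (hE.1 _).le) |>.trans ?_
    refine Nat.mul_le_mul_right _ (hE.2 _).le
  have hsub : E ⊆ S1 ∪ S2 := by
    rintro ⟨x, y⟩ hxy
    rw [mem_union]
    by_cases ht : T E a y
    · left
      obtain ⟨i, j, h1, h2, h3⟩ := ht
      simp only [S1, row, col, mem_biUnion, mem_filter]
      exact ⟨(i, y), ⟨(i, j), ⟨(a, j), ⟨h1, rfl⟩, h2, rfl⟩, h3, rfl⟩, hxy, rfl⟩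
    · right
      obtain ⟨i, j, h1, h2, h3⟩ := hcon x y hxy ht
      simp only [S2, row, col, mem_biUnion, mem_filter]
      exact ⟨(x, j), ⟨(i, j), ⟨(i, b), ⟨h3, rfl⟩, h2, rfl⟩, h1, rfl⟩, hxy, rfl⟩
  have := (card_le_card hsub).trans (card_union_le _ _)
  have e : k * r * k * r = r * k * r * k := by ring
  omega

lemma exists_QuadFree {r k : ℕ} (E : Finset (α × β)) (hE : BR r k E)
    (hc : 2 * (r * k * r * k) < Fintype.card α * r) :
    ∃ E : Finset (α × β), BR r k E ∧ QuadFree E := by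
  classical
  let F (E : Finset (α × β)) : Finset (α × α × β × β) :=
    univ.filter (fun q => Q E q.1 q.2.1 q.2.2.1 q.2.2.2)
  induction hn : (F E).card using Nat.strong_induction_on generalizing E with
  | _ n ih =>
    by_cases h4 : QuadFree E
    · exact ⟨E, hE, h4⟩
    · unfold QuadFree at h4
      push Not at h4
      obtain ⟨a, i', b, j', q⟩ := h4
      have hcard : E.card = Fintype.card α * r := by
        rw [card_eq_sum_card_fiberwise (f := Prod.fst) (t := univ) (by simp)]
        simp [hE.1]
      obtain ⟨a', b', h', t, t'⟩ := exists_far hE (hcard ▸ hc) a b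
      have h := q.2.2.1
      obtain ⟨n1, n2, ha, hb⟩ := basic h h' t t'
      refine ih _ ?_ (sw E a a' b b') (sw_BR hE h h' t t') rfl
      rw [← hn]
      apply card_lt_card
      rw [ssubset_iff_of_subset]
      · refine ⟨(a, i', b, j'), by simpa [F] using q, ?_⟩
        simp only [F, mem_filter, mem_univ, true_and]
        intro q'
        have := q'.2.2.1
        rw [mem_sw] at this
        tauto
      · intro p hp
        simp only [F, mem_filter, mem_univ, true_and] at hp ⊢
        exact sw_Q h h' t t' hp

lemma exists_init {v b r k : ℕ} (hr : 0 < r) (hvb : v * r = b * k) (hrb : r ≤ b) :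
    ∃ E : Finset (Fin v × Fin b), BR r k E := by
  classical
  have hb : 0 < b := by omega
  refine ⟨univ.filter (fun p => ∃ n < v * r, n / r = p.1 ∧ n % b = p.2), ?_, ?_⟩
  · intro i
    have hi := i.2
    refine Eq.trans (Eq.symm (card_bij
      (fun t (_ : t ∈ range r) => (i, (⟨(i * r + t) % b, Nat.mod_lt _ hb⟩ : Fin b))) ?_ ?_ ?_))
      (card_range r)
    · intro t ht
      rw [mem_range] at ht
      simp only [mem_filter, mem_univ, true_and, and_true]
      refine ⟨i * r + t, ?_, ?_, rfl⟩
      · calc (i : ℕ) * r + t < i * r + r := by omega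
          _ = (i + 1) * r := by ring
          _ ≤ v * r := Nat.mul_le_mul_right _ hi
      · rw [mul_comm, Nat.mul_add_div hr, Nat.div_eq_of_lt ht, add_zero]
    · intro t ht t' ht' e
      rw [mem_range] at ht ht'
      simp only [Prod.mk.injEq, Fin.mk.injEq, true_and] at e
      have e2 : t ≡ t' [MOD b] := Nat.ModEq.add_left_cancel' _ e
      exact Nat.ModEq.eq_of_lt_of_lt e2 (by omega) (by omega)
    · rintro ⟨x, y⟩ hxy
      simp only [mem_filter, mem_univ, true_and] at hxy
      obtain ⟨⟨n, hn, h1, h2⟩, rfl⟩ := hxy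
      refine ⟨n % r, mem_range.2 (Nat.mod_lt _ hr), ?_⟩
      simp only [Prod.mk.injEq, true_and]
      ext
      simp only [← h1, Nat.div_add_mod', h2]
  · intro j
    have hj := j.2
    have hlt : ∀ m < k, m * b + j < v * r := by
      intro m hm
      calc m * b + j < m * b + b := by omega
        _ = b * (m + 1) := by ring
        _ ≤ b * k := Nat.mul_le_mul_left _ hm
        _ = v * r := hvb.symm
    refine Eq.trans (Eq.symm (card_bij
      (fun m (hm : m ∈ range k) => ((⟨(m * b + j) / r,
        Nat.div_lt_of_lt_mul (by rw [mul_comm r]; exact hlt m (mem_range.1 hm))⟩ : Fin v), j))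
      ?_ ?_ ?_)) (card_range k)
    · intro m hm
      rw [mem_range] at hm
      simp only [mem_filter, mem_univ, true_and, and_true]
      refine ⟨m * b + j, hlt m hm, rfl, ?_⟩
      rw [mul_comm, Nat.mul_add_mod, Nat.mod_eq_of_lt hj]
    · have key : ∀ m m', m < m' → (m * b + j) / r < (m' * b + j) / r := by
        intro m m' h
        have : m * b + b ≤ m' * b := by
          calc m * b + b = (m + 1) * b := by ring
            _ ≤ m' * b := Nat.mul_le_mul_right _ h
        calc (m * b + j) / r < (m * b + j) / r + 1 := by omega
          _ = (m * b + j + r) / r := by rw [Nat.add_div_right _ hr]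
          _ ≤ _ := Nat.div_le_div_right (by omega)
      intro m hm m' hm' e
      simp only [Prod.mk.injEq, Fin.mk.injEq, and_true] at e
      rcases lt_trichotomy m m' with h | h | h
      · have := key _ _ h; omega
      · exact h
      · have := key _ _ h; omega
    · rintro ⟨x, y⟩ hxy
      simp only [mem_filter, mem_univ, true_and] at hxy
      obtain ⟨⟨n, hn, h1, h2⟩, rfl⟩ := hxy
      refine ⟨n / b, mem_range.2 (Nat.div_lt_of_lt_mul (by omega)), ?_⟩
      simp only [Prod.mk.injEq, and_true]
      ext
      simp only [← h2, Nat.div_add_mod', h1]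

/-! ### Graphs -/

/-- The bipartite graph of an edge set. -/
def gr (E : Finset (α × β)) : SimpleGraph (α ⊕ β) where
  Adj x y := (∃ a b, (a, b) ∈ E ∧ x = Sum.inl a ∧ y = Sum.inr b) ∨
    (∃ a b, (a, b) ∈ E ∧ x = Sum.inr b ∧ y = Sum.inl a)
  symm := ⟨by
    rintro x y (⟨a, b, h, rfl, rfl⟩ | ⟨a, b, h, rfl, rfl⟩)
    · exact Or.inr ⟨a, b, h, rfl, rfl⟩
    · exact Or.inl ⟨a, b, h, rfl, rfl⟩⟩
  loopless := ⟨by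
    rintro x (⟨a, b, h, rfl, h'⟩ | ⟨a, b, h, rfl, h'⟩) <;> cases h'⟩

@[simp] lemma gr_lr {E : Finset (α × β)} {a : α} {b : β} :
    (gr E).Adj (Sum.inl a) (Sum.inr b) ↔ (a, b) ∈ E := by simp [gr]

@[simp] lemma gr_rl {E : Finset (α × β)} {a : α} {b : β} :
    (gr E).Adj (Sum.inr b) (Sum.inl a) ↔ (a, b) ∈ E := by simp [gr]

@[simp] lemma gr_ll {E : Finset (α × β)} {a a' : α} :
    ¬ (gr E).Adj (Sum.inl a) (Sum.inl a') := by simp [gr]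

@[simp] lemma gr_rr {E : Finset (α × β)} {b b' : β} :
    ¬ (gr E).Adj (Sum.inr b) (Sum.inr b') := by simp [gr]

lemma ncard_inl {E : Finset (α × β)} (a : α) :
    ((gr E).neighborSet (Sum.inl a)).ncard = (E.filter (fun p => p.1 = a)).card := by
  have : (gr E).neighborSet (Sum.inl a) =
      (fun p : α × β => (Sum.inr p.2 : α ⊕ β)) '' (E.filter (fun p => p.1 = a) : Finset _) := by
    ext x
    rcases x with x | x <;> simp
  rw [this, Set.InjOn.ncard_image, Set.ncard_coe_finset]
  rintro ⟨x, y⟩ h ⟨x', y'⟩ h' e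
  simp at h h' e
  grind

lemma ncard_inr {E : Finset (α × β)} (b : β) :
    ((gr E).neighborSet (Sum.inr b)).ncard = (E.filter (fun p => p.2 = b)).card := by
  have : (gr E).neighborSet (Sum.inr b) =
      (fun p : α × β => (Sum.inl p.1 : α ⊕ β)) '' (E.filter (fun p => p.2 = b) : Finset _) := by
    ext x
    rcases x with x | x <;> simp
  rw [this, Set.InjOn.ncard_image, Set.ncard_coe_finset]
  rintro ⟨x, y⟩ h ⟨x', y'⟩ h' e
  simp at h h' e
  grind

lemma c4_iff {E : Finset (α × β)} :
    QuadFree E ↔ ∀ (x : α ⊕ β) (c : (gr E).Walk x x), c.IsCycle → c.length ≠ 4 := by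
  constructor
  · intro h x c hc hl
    match c, hc, hl with
    | .cons (v := y) h1 (.cons (v := z) h2 (.cons (v := w) h3 (.cons h4 .nil))), hc, _ =>
      have hn := hc.support_nodup
      simp at hn
      rcases x with x | x <;> rcases y with y | y <;> rcases z with z | z <;>
        rcases w with w | w <;> simp at h1 h2 h3 h4
      · exact h x z y w ⟨by grind, by grind, h1, h2, h4, h3⟩
      · exact h y w x z ⟨by grind, by grind, h1, h4, h2, h3⟩
  · rintro h i i' j j' ⟨hi, hj, h1, h2, h3, h4⟩
    have a1 : (gr E).Adj (Sum.inl i) (Sum.inr j) := by simpa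
    have a2 : (gr E).Adj (Sum.inr j) (Sum.inl i') := by simpa
    have a3 : (gr E).Adj (Sum.inl i') (Sum.inr j') := by simpa
    have a4 : (gr E).Adj (Sum.inr j') (Sum.inl i) := by simpa
    refine h _ (.cons a1 (.cons a2 (.cons a3 (.cons a4 .nil)))) ?_ rfl
    rw [Walk.isCycle_def, Walk.isTrail_def]
    simp [hi, hj, hi.symm]

lemma not_acyclic {V : Type} [Fintype V] [Nonempty V] (G : SimpleGraph V)
    (h : ∀ x, 2 ≤ (G.neighborSet x).ncard) : ¬ G.IsAcyclic := by
  classical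
  intro hG
  have key : ∀ n : ℕ, ∃ (x y : V) (p : G.Walk x y), p.IsPath ∧ p.length = n := by
    intro n
    induction n with
    | zero =>
      let x : V := Classical.arbitrary V
      exact ⟨x, x, .nil, by simp, rfl⟩
    | succ n ih =>
      obtain ⟨x, y, p, hp, hl⟩ := ih
      obtain ⟨w, hw, hne⟩ := Set.exists_ne_of_one_lt_ncard (h y) p.penultimate
      have hw' : G.Adj y w := hw
      refine ⟨x, w, p.concat hw', hp.concat (fun hs => hne ?_) hw', by simp [hl]⟩
      exact hG.eq_penultimate_of_adj_end hp hw' hs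
  obtain ⟨x, y, p, hp, hl⟩ := key (Fintype.card V)
  have := hp.length_lt
  omega

lemma exists_connected {r k : ℕ} (hr : 2 ≤ r) (hk : 2 ≤ k) (E : Finset (α × β))
    (hE : BR r k E) (h4 : QuadFree E) :
    ∃ E : Finset (α × β), BR r k E ∧ QuadFree E ∧ (gr E).Preconnected := by
  classical
  let F (E : Finset (α × β)) : Finset ((α ⊕ β) × (α ⊕ β)) :=
    univ.filter (fun q => ¬ (gr E).Reachable q.1 q.2)
  induction hn : (F E).card using Nat.strong_induction_on generalizing E with
  | _ n ih =>
    by_cases hp : (gr E).Preconnected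
    · exact ⟨E, hE, h4, hp⟩
    have hdeg : ∀ x, 2 ≤ ((gr E).neighborSet x).ncard := by
      rintro (x | x)
      · rw [ncard_inl, hE.1]; exact hr
      · rw [ncard_inr, hE.2]; exact hk
    -- an edge in every component
    have hedge : ∀ x : α ⊕ β, ∃ a b, (a, b) ∈ E ∧ (gr E).Reachable x (Sum.inl a) := by
      rintro (x | x)
      · have := hE.1 x
        obtain ⟨⟨a, b⟩, hab⟩ := card_pos.1 (by omega : 0 < (E.filter (fun p => p.1 = x)).card)
        simp only [mem_filter] at hab
        obtain ⟨hab, rfl⟩ := hab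
        exact ⟨a, b, hab, .rfl⟩
      · have := hE.2 x
        obtain ⟨⟨a, b⟩, hab⟩ := card_pos.1 (by omega : 0 < (E.filter (fun p => p.2 = x)).card)
        simp only [mem_filter] at hab
        obtain ⟨hab, rfl⟩ := hab
        exact ⟨a, b, hab, Adj.reachable (by simpa)⟩
    have hp' := hp
    unfold SimpleGraph.Preconnected at hp
    push Not at hp
    obtain ⟨x, y, hxy⟩ := hp
    have : Nonempty (α ⊕ β) := ⟨x⟩
    have hac := not_acyclic (gr E) hdeg
    rw [isAcyclic_iff_forall_adj_isBridge] at hac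
    have : ∃ a b, (a, b) ∈ E ∧ ¬ (gr E).IsBridge s(Sum.inl a, Sum.inr b) := by
      by_contra hcon
      push Not at hcon
      apply hac
      rintro (u | u) (w | w) huw
      · simp at huw
      · exact hcon _ _ (by simpa using huw)
      · rw [Sym2.eq_swap]; exact hcon _ _ (by simpa using huw)
      · simp at huw
    obtain ⟨a, b, h, hbr⟩ := this
    rw [isBridge_iff, not_not] at hbr
    have : ∃ a' b', (a', b') ∈ E ∧ ¬ (gr E).Reachable (Sum.inl a) (Sum.inl a') := by
      by_contra hcon
      push Not at hcon
      obtain ⟨a1, b1, h1, r1⟩ := hedge x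
      obtain ⟨a2, b2, h2, r2⟩ := hedge y
      exact hxy (r1.trans (((hcon _ _ h1).symm.trans (hcon _ _ h2)).trans r2.symm))
    obtain ⟨a', b', h', hnr⟩ := this
    have rT : ∀ {x y}, T E x y → (gr E).Reachable (Sum.inl x) (Sum.inr y) := by
      rintro x y ⟨i, j, h1, h2, h3⟩
      exact (Adj.reachable (v := Sum.inr j) (by simpa using h1)).trans ((Adj.reachable (v := Sum.inl i)
        (by simpa using h2)).trans (Adj.reachable (by simpa using h3)))
    have rab : (gr E).Reachable (Sum.inl a) (Sum.inr b) := Adj.reachable (by simpa)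
    have rab' : (gr E).Reachable (Sum.inl a') (Sum.inr b') := Adj.reachable (by simpa)
    have t : ¬ T E a b' := fun tt => hnr ((rT tt).trans rab'.symm)
    have t' : ¬ T E a' b := fun tt => hnr (rab.trans (rT tt).symm)
    set G' := gr (sw E a a' b b') with hG'
    have e1 : G'.Reachable (Sum.inl a) (Sum.inr b') := Adj.reachable (by simp [hG', mem_sw])
    have e2 : G'.Reachable (Sum.inl a') (Sum.inr b) := Adj.reachable (by simp [hG', mem_sw])
    have step : ∀ {u w}, (u, w) ∈ E → ¬ (u = a ∧ w = b) → ¬ (u = a' ∧ w = b') →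
        (u, w) ∈ sw E a a' b b' := by
      intro u w huw h1 h2
      rw [mem_sw]; tauto
    have key : ∀ {u w} (p : ((gr E).deleteEdges {s(Sum.inl a, Sum.inr b)}).Walk u w),
        (gr E).Reachable (Sum.inl a) u → G'.Reachable u w := by
      intro u w p
      induction p with
      | nil => intro _; exact .rfl
      | @cons u m w hum p ih =>
        intro hu
        have hum' : (gr E).Adj u m := by
          rw [deleteEdges_adj] at hum; exact hum.1
        refine Reachable.trans (Adj.reachable ?_) (ih (hu.trans hum'.reachable))
        rw [deleteEdges_adj] at hum
        rcases u with u | u <;> rcases m with m | m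
        · simp at hum'
        · simp only [hG', gr_lr] at hum' ⊢
          refine step hum' (by rintro ⟨rfl, rfl⟩; simp at hum) ?_
          rintro ⟨rfl, rfl⟩
          exact hnr hu
        · simp only [hG', gr_rl] at hum' ⊢
          refine step hum' (by rintro ⟨rfl, rfl⟩; simp at hum) ?_
          rintro ⟨rfl, rfl⟩
          exact hnr (hu.trans rab'.symm)
        · simp at hum'
    have e3 : G'.Reachable (Sum.inl a) (Sum.inr b) := by
      obtain ⟨p⟩ := hbr
      exact key p .rfl
    have e4 : G'.Reachable (Sum.inl a) (Sum.inl a') := e3.trans e2.symm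
    have adj : ∀ u w, (u, w) ∈ E → G'.Reachable (Sum.inl u) (Sum.inr w) := by
      intro u w huw
      by_cases c1 : u = a ∧ w = b
      · obtain ⟨rfl, rfl⟩ := c1; exact e3
      by_cases c2 : u = a' ∧ w = b'
      · obtain ⟨rfl, rfl⟩ := c2; exact e4.symm.trans e1
      exact Adj.reachable (by rw [hG', gr_lr]; exact step huw c1 c2)
    have mono : ∀ u w, (gr E).Reachable u w → G'.Reachable u w := by
      rintro u w ⟨p⟩
      induction p with
      | nil => exact .rfl
      | @cons u m w hum p ih =>
        refine Reachable.trans ?_ ih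
        rcases u with u | u <;> rcases m with m | m
        · simp at hum
        · exact adj _ _ (by simpa using hum)
        · exact (adj _ _ (by simpa using hum)).symm
        · simp at hum
    refine ih _ ?_ (sw E a a' b b') (sw_BR hE h h' t t')
      (fun i i' j j' q => h4 _ _ _ _ (sw_Q h h' t t' q)) rfl
    rw [← hn]
    apply card_lt_card
    rw [ssubset_iff_of_subset]
    · refine ⟨(Sum.inl a, Sum.inl a'), by simpa [F] using hnr, ?_⟩
      simpa [F] using e4
    · intro p hp
      simp only [F, mem_filter, mem_univ, true_and] at hp ⊢
      exact fun hh => hp (mono _ _ hh)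

lemma configurable_iff {v b r k : ℕ} (hr : 2 ≤ r) (hk : 2 ≤ k) :
    Configurable v b r k ↔ ∃ E : Finset (Fin v × Fin b), BR r k E ∧ QuadFree E := by
  classical
  constructor
  · rintro ⟨G, h1, h2, -, h3, h4, h5⟩
    let E : Finset (Fin v × Fin b) := univ.filter (fun p => G.Adj (Sum.inl p.1) (Sum.inr p.2))
    have hG : gr E = G := by
      ext x y
      rcases x with x | x <;> rcases y with y | y <;> simp [E, h1, h2, G.adj_comm]
    rw [← hG] at h3 h4 h5
    refine ⟨E, ⟨fun a => ?_, fun b => ?_⟩, c4_iff.2 h5⟩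
    · rw [← h3 a, ncard_inl]
    · rw [← h4 b, ncard_inr]
  · rintro ⟨E, hE, h4⟩
    obtain ⟨E, hE, h4, hp⟩ := exists_connected hr hk E hE h4
    refine ⟨gr E, fun _ _ => gr_ll, fun _ _ => gr_rr, hp, fun a => ?_, fun b => ?_, c4_iff.1 h4⟩
    · rw [ncard_inl, hE.1]
    · rw [ncard_inr, hE.2]

lemma add_aux {v b v' b' r k : ℕ} (E : Finset (Fin v × Fin b)) (E' : Finset (Fin v' × Fin b'))
    (hE : BR r k E) (h4 : QuadFree E) (hE' : BR r k E') (h4' : QuadFree E') :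
    ∃ E : Finset (Fin (v + v') × Fin (b + b')), BR r k E ∧ QuadFree E := by
  classical
  let f : Fin v × Fin b ↪ Fin (v + v') × Fin (b + b') :=
    (Fin.castAddEmb v').prodMap (Fin.castAddEmb b')
  let g : Fin v' × Fin b' ↪ Fin (v + v') × Fin (b + b') :=
    (Fin.natAddEmb v).prodMap (Fin.natAddEmb b)
  let S := E.map f ∪ E'.map g
  have m : ∀ x y, (x, y) ∈ S ↔ (∃ i j, (i, j) ∈ E ∧ Fin.castAdd v' i = x ∧ Fin.castAdd b' j = y) ∨
      (∃ i j, (i, j) ∈ E' ∧ Fin.natAdd v i = x ∧ Fin.natAdd b j = y) := by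
    intro x y
    simp [S, f, g]
  have ne1 : ∀ (i : Fin v) (j : Fin v'), Fin.castAdd v' i ≠ Fin.natAdd v j := by
    intro i j e
    have := congrArg Fin.val e
    simp at this
    omega
  have ne2 : ∀ (i : Fin b) (j : Fin b'), Fin.castAdd b' i ≠ Fin.natAdd b j := by
    intro i j e
    have := congrArg Fin.val e
    simp at this
    omega
  refine ⟨S, ⟨fun x => ?_, fun y => ?_⟩, ?_⟩
  · induction x using Fin.addCases with
    | left i =>
      rw [← hE.1 i, ← card_map f]
      congr 1
      ext ⟨x, y⟩
      rw [mem_filter, m]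
      simp [f]
      grind [Fin.castAdd_inj]
    | right i =>
      rw [← hE'.1 i, ← card_map g]
      congr 1
      ext ⟨x, y⟩
      rw [mem_filter, m]
      simp [g]
      grind [Fin.natAdd_inj]
  · induction y using Fin.addCases with
    | left i =>
      rw [← hE.2 i, ← card_map f]
      congr 1
      ext ⟨x, y⟩
      rw [mem_filter, m]
      simp [f]
      grind [Fin.castAdd_inj]
    | right i =>
      rw [← hE'.2 i, ← card_map g]
      congr 1
      ext ⟨x, y⟩
      rw [mem_filter, m]
      simp [g]
      grind [Fin.natAdd_inj]
  · rintro x x' y y' ⟨hx, hy, h1, h2, h3, h5⟩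
    have l : ∀ i j, (Fin.castAdd v' i, Fin.castAdd b' j) ∈ S ↔ (i, j) ∈ E := by
      intro i j; rw [m]; grind [Fin.castAdd_inj]
    have rr : ∀ i j, (Fin.natAdd v i, Fin.natAdd b j) ∈ S ↔ (i, j) ∈ E' := by
      intro i j; rw [m]; grind [Fin.natAdd_inj]
    have lr : ∀ i j, (Fin.castAdd v' i, Fin.natAdd b j) ∉ S := by
      intro i j; rw [m]; grind
    have rl : ∀ i j, (Fin.natAdd v i, Fin.castAdd b' j) ∉ S := by
      intro i j; rw [m]; grind
    induction x using Fin.addCases <;> induction x' using Fin.addCases <;>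
      induction y using Fin.addCases <;> induction y' using Fin.addCases <;>
      simp only [l, rr, lr, rl] at h1 h2 h3 h5
    · exact h4 _ _ _ _ ⟨fun e => hx (congrArg _ e), fun e => hy (congrArg _ e), h1, h2, h3, h5⟩
    · exact h4' _ _ _ _ ⟨fun e => hx (congrArg _ e), fun e => hy (congrArg _ e), h1, h2, h3, h5⟩

end Cfg

/-- For `r ≥ 2` and `k ≥ 2`, the set `D r k` is a numerical semigroup:
it contains `0`, is closed under addition, and has finite complement in `ℕ`. -/
theorem D_is_numerical_semigroup (r k : ℕ) (hr : 2 ≤ r) (hk : 2 ≤ k) :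
    0 ∈ D r k ∧ (∀ d d' : ℕ, d ∈ D r k → d' ∈ D r k → d + d' ∈ D r k) ∧
      (D r k)ᶜ.Finite := by
  have hg : 0 < Nat.gcd r k := Nat.gcd_pos_of_pos_left _ (by omega)
  obtain ⟨r', hr'⟩ := Nat.gcd_dvd_left r k
  obtain ⟨k', hk'⟩ := Nat.gcd_dvd_right r k
  set g := Nat.gcd r k with hgdef
  have hD : ∀ d, d ∈ D r k ↔
      ∃ E : Finset (Fin (d * k') × Fin (d * r')), Cfg.BR r k E ∧ Cfg.QuadFree E := by
    intro d
    have e1 : d * k / g = d * k' := by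
      conv_lhs => rw [hk', mul_left_comm]
      exact Nat.mul_div_cancel_left _ hg
    have e2 : d * r / g = d * r' := by
      conv_lhs => rw [hr', mul_left_comm]
      exact Nat.mul_div_cancel_left _ hg
    show Configurable (d * k / g) (d * r / g) r k ↔ _
    rw [e1, e2, Cfg.configurable_iff hr hk]
  have hr0 : 0 < r' := by
    rcases Nat.eq_zero_or_pos r' with h | h
    · rw [h] at hr'; omega
    · exact h
  have hk0 : 0 < k' := by
    rcases Nat.eq_zero_or_pos k' with h | h
    · rw [h] at hk'; omega
    · exact h
  refine ⟨?_, ?_, ?_⟩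
  · rw [hD, zero_mul, zero_mul]
    exact ⟨∅, ⟨fun a => a.elim0, fun a => a.elim0⟩, fun a => a.elim0⟩
  · intro d d' h h'
    rw [hD] at h h' ⊢
    obtain ⟨E, hE, h4⟩ := h
    obtain ⟨E', hE', h4'⟩ := h'
    rw [add_mul, add_mul]
    exact Cfg.add_aux E E' hE h4 hE' h4'
  · refine (Set.finite_lt_nat (2 * (r * k * r * k) + 1 + r)).subset ?_
    intro d hd
    by_contra hlt
    simp only [Set.mem_ofPred_eq, not_lt] at hlt
    apply hd
    rw [hD]
    have b1 : d ≤ d * k' := Nat.le_mul_of_pos_right _ hk0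
    have b2 : d ≤ d * r' := Nat.le_mul_of_pos_right _ hr0
    have hvb : d * k' * r = d * r' * k := by
      calc d * k' * r = d * k' * (g * r') := by rw [← hr']
        _ = d * r' * (g * k') := by ring
        _ = d * r' * k := by rw [← hk']
    obtain ⟨E, hE⟩ := Cfg.exists_init (v := d * k') (b := d * r') (r := r) (k := k)
      (by omega) hvb (by omega)
    refine Cfg.exists_QuadFree E hE ?_
    rw [Fintype.card_fin]
    have : d * k' ≤ d * k' * r := Nat.le_mul_of_pos_right _ (by omega)
    omega
end

section
/- For all integers r ≥ 2 and k ≥ 2 there exists a natural number N such that for all positive integers v, b with v·r = b·k and v ≥ N, the tuple (v,b,r,k) is configurable, i.e., a (v,b,r,k)-combinatorial configuration exists. -/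
open SimpleGraph

/-- Transport: an abstract incidence relation gives a configuration. -/
theorem cfg_of_rel {L R : Type} [Fintype L] [Fintype R] (v b r k : ℕ)
    (hL : Fintype.card L = v) (hR : Fintype.card R = b) (hk : 0 < k)
    (I : L → R → Prop)
    (h1 : ∀ l, {x | I l x}.ncard = r) (h2 : ∀ x, {l | I l x}.ncard = k)
    (h3 : ∀ l l' x y, I l x → I l y → I l' x → I l' y → l = l' ∨ x = y)
    (h4 : ∀ l l', Relation.ReflTransGen (fun a c => ∃ x, I a x ∧ I c x) l l') :
    Configurable v b r k := by
  let eL : Fin v ≃ L := (Fintype.equivFinOfCardEq hL).symm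
  let eR : Fin b ≃ R := (Fintype.equivFinOfCardEq hR).symm
  let G : SimpleGraph (Fin v ⊕ Fin b) :=
    { Adj := fun a c => match a, c with
        | Sum.inl i, Sum.inr j => I (eL i) (eR j)
        | Sum.inr j, Sum.inl i => I (eL i) (eR j)
        | _, _ => False
      symm := ⟨by
        rintro (a | a) (c | c) h <;> exact h⟩
      loopless := ⟨by rintro (a | a) h <;> exact h⟩ }
  have a1 : ∀ i j, G.Adj (Sum.inl i) (Sum.inr j) ↔ I (eL i) (eR j) := fun _ _ => Iff.rfl
  have a2 : ∀ i j, G.Adj (Sum.inr j) (Sum.inl i) ↔ I (eL i) (eR j) := fun _ _ => Iff.rfl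
  have a3 : ∀ i j, ¬ G.Adj (Sum.inl i) (Sum.inl j) := fun _ _ h => h
  have a4 : ∀ i j, ¬ G.Adj (Sum.inr i) (Sum.inr j) := fun _ _ h => h
  have r1 : ∀ l l', G.Reachable (Sum.inl (eL.symm l)) (Sum.inl (eL.symm l')) := by
    intro l l'
    have := h4 l l'
    induction this with
    | refl => exact Reachable.refl _
    | tail _ hs ih =>
      obtain ⟨x, hx, hy⟩ := hs
      refine ih.trans ?_
      have e1 : G.Adj (Sum.inl (eL.symm _)) (Sum.inr (eR.symm x)) :=
        (a1 _ _).2 (by simpa using hx)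
      have e2 : G.Adj (Sum.inr (eR.symm x)) (Sum.inl (eL.symm _)) :=
        (a2 _ _).2 (by simpa using hy)
      exact e1.reachable.trans e2.reachable
  have r2 : ∀ w, ∃ l, G.Reachable w (Sum.inl (eL.symm l)) := by
    rintro (i | j)
    · exact ⟨eL i, by simp⟩
    · have : {l | I l (eR j)}.Nonempty := by
        apply Set.nonempty_of_ncard_ne_zero
        rw [h2]; omega
      obtain ⟨l, hl⟩ := this
      refine ⟨l, Adj.reachable ((a2 _ _).2 ?_)⟩
      simpa using hl
  refine ⟨G, a3, a4, ?_, ?_, ?_, ?_⟩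
  · intro u w
    obtain ⟨l, hl⟩ := r2 u
    obtain ⟨l', hl'⟩ := r2 w
    exact hl.trans ((r1 l l').trans hl'.symm)
  · intro i
    rw [← h1 (eL i)]
    have : G.neighborSet (Sum.inl i) = (fun x => Sum.inr (eR.symm x)) '' {x | I (eL i) x} := by
      ext (w | w)
      · simp [a3]
      · simp only [mem_neighborSet, a1, Set.mem_image, Set.mem_ofPred_eq]
        constructor
        · intro h; exact ⟨_, h, by simp⟩
        · rintro ⟨x, hx, e⟩
          have := Sum.inr.inj e
          subst this; simpa using hx
    rw [this, Set.ncard_image_of_injective]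
    intro x y h
    simpa using h
  · intro j
    rw [← h2 (eR j)]
    have : G.neighborSet (Sum.inr j) = (fun x => Sum.inl (eL.symm x)) '' {x | I x (eR j)} := by
      ext (w | w)
      · simp only [mem_neighborSet, a2, Set.mem_image, Set.mem_ofPred_eq]
        constructor
        · intro h; exact ⟨_, h, by simp⟩
        · rintro ⟨x, hx, e⟩
          have := Sum.inl.inj e
          subst this; simpa using hx
      · simp [a4]
    rw [this, Set.ncard_image_of_injective]
    intro x y h
    simpa using h
  · intro x c hc hlen
    have hn := hc.support_nodup
    match c, hlen, hn with
    | .cons (v := x1) e1 (.cons (v := x2) e2 (.cons (v := x3) e3 (.cons e4 .nil))), _, hn =>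
      simp only [Walk.support_cons, Walk.support_nil, List.tail_cons, List.nodup_cons,
        List.mem_cons, List.not_mem_nil, or_false, not_or] at hn
      obtain ⟨⟨_, n13, _⟩, ⟨_, n20⟩, _⟩ := hn
      rcases x with x | x <;> rcases x1 with x1 | x1
      · exact a3 _ _ e1
      · rcases x2 with x2 | x2
        · rcases x3 with x3 | x3
          · exact a3 _ _ e3
          · rcases h3 _ _ _ _ ((a1 _ _).1 e1) ((a2 _ _).1 e4) ((a2 _ _).1 e2)
              ((a1 _ _).1 e3) with h | h
            · exact n20 (by rw [eL.injective h])
            · exact n13 (by rw [eR.injective h])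
        · exact a4 _ _ e2
      · rcases x2 with x2 | x2
        · exact a3 _ _ e2
        · rcases x3 with x3 | x3
          · rcases h3 _ _ _ _ ((a2 _ _).1 e1) ((a1 _ _).1 e2) ((a1 _ _).1 e4)
              ((a2 _ _).1 e3) with h | h
            · exact n13 (by rw [eL.injective h])
            · exact n20 (by rw [eR.injective h])
          · exact a4 _ _ e3
      · exact a4 _ _ e1

theorem pow5_sidon (a b c d : ℕ) (h : 5 ^ a + 5 ^ b = 5 ^ c + 5 ^ d) : a = c ∨ a = d := by
  have mono : ∀ x y : ℕ, x < y → 5 * 5 ^ x ≤ 5 ^ y := by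
    intro x y hxy
    calc 5 * 5 ^ x = 5 ^ (x + 1) := by ring
      _ ≤ 5 ^ y := Nat.pow_le_pow_right (by norm_num) hxy
  have inj : ∀ x y : ℕ, 5 ^ x = 5 ^ y → x = y := fun x y h => Nat.pow_right_injective (by norm_num : 2 ≤ 5) h
  have pa : 0 < 5 ^ a := by positivity
  have pb : 0 < 5 ^ b := by positivity
  have pc : 0 < 5 ^ c := by positivity
  have pd : 0 < 5 ^ d := by positivity
  by_contra hn
  push Not at hn
  by_cases hbc : b = c
  · subst hbc; exact hn.2 (inj _ _ (by omega))
  by_cases hbd : b = d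
  · subst hbd; exact hn.1 (inj _ _ (by omega))
  have m1 := mono a c
  have m2 := mono c a
  have m3 := mono a d
  have m4 := mono d a
  have m5 := mono b c
  have m6 := mono c b
  have m7 := mono b d
  have m8 := mono d b
  generalize 5 ^ a = A at *
  generalize 5 ^ b = B at *
  generalize 5 ^ c = C at *
  generalize 5 ^ d = E at *
  omega

/-- Integer Sidon function with one free value `c ≡ 1 (mod 5)`. -/
theorem sidon_aux {E : Type} [DecidableEq E] (e0 : E) (f : E → ℕ) (hf : Function.Injective f)
    (c : ℤ) (hc : (5 : ℤ) ∣ c - 1) (s : E → ℤ)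
    (hs : ∀ e, s e = if e = e0 then c else 5 ^ (f e + 1))
    (p q t u : E) (h : s p + s q = s t + s u) : p = t ∨ p = u := by
  have s0 : s e0 = c := by simp [hs]
  have s1 : ∀ e, e ≠ e0 → s e = ((5 ^ (f e + 1) : ℕ) : ℤ) := by
    intro e he; simp [hs, he]
  have s5 : ∀ e, e ≠ e0 → (5 : ℤ) ∣ s e := by
    intro e he; rw [hs, if_neg he, pow_succ]; exact Dvd.intro_left _ rfl
  have inj : ∀ x y, x ≠ e0 → y ≠ e0 → s x = s y → x = y := by
    intro x y hx hy h
    rw [s1 x hx, s1 y hy] at h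
    have h := Nat.pow_right_injective (by norm_num : 2 ≤ 5) (Int.ofNat.inj h)
    exact hf (by simpa using h)
  by_cases hp : p = e0
  · by_contra hn
    push Not at hn
    subst hp
    have := s5 t hn.1.symm
    have := s5 u hn.2.symm
    by_cases hq : q = p
    · subst hq; omega
    · have := s5 q hq
      omega
  · have := s5 p hp
    by_cases hq : q = e0
    · subst hq
      by_cases ht : t = q
      · subst ht
        by_cases hu : u = t
        · subst hu; omega
        · exact Or.inr (inj _ _ hp hu (by omega))
      · have := s5 t ht
        by_cases hu : u = q
        · subst hu
          exact Or.inl (inj _ _ hp ht (by omega))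
        · have := s5 u hu
          omega
    · have := s5 q hq
      by_cases ht : t = e0
      · subst ht
        by_cases hu : u = t
        · subst hu; omega
        · have := s5 u hu
          omega
      · have := s5 t ht
        by_cases hu : u = e0
        · subst hu; omega
        · rw [s1 p hp, s1 q hq, s1 t ht, s1 u hu] at h
          rcases pow5_sidon _ _ _ _ (by exact_mod_cast h) with h | h
          · exact Or.inl (hf (by omega))
          · exact Or.inr (hf (by omega))

/-- The cyclic cover with voltages `s`. -/
theorem cfg_cyclic {A B C : Type} [Fintype A] [Fintype B] [Fintype C]
    (a0 : A) (b0 : B) (t0 : C) (s : A × B × C → ℤ) (M : ℤ) (hM : ∀ e, |s e| ≤ M)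
    (sid : ∀ p q t u, s p + s q = s t + s u → p = t ∨ p = u)
    (d : ℕ) (hd : 4 * M < d)
    (step : ∀ x : ZMod d, Relation.ReflTransGen
      (fun y z : ZMod d × A => ∃ j t t', y.1 + (s (y.2, j, t) : ZMod d) = z.1 + s (z.2, j, t'))
      (x, a0) (x + 1, a0)) :
    Configurable (d * Fintype.card A) (d * Fintype.card B)
      (Fintype.card B * Fintype.card C) (Fintype.card A * Fintype.card C) := by
  have hM0 : 0 ≤ M := (abs_nonneg _).trans (hM (a0, b0, t0))
  have : NeZero d := ⟨by rintro rfl; simp at hd; omega⟩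
  have sidm : ∀ p q t u, (s p + s q : ZMod d) = s t + s u → p = t ∨ p = u := by
    intro p q t u h
    apply sid p q t u
    have h' : ((s p + s q - (s t + s u) : ℤ) : ZMod d) = 0 := by
      push_cast; rw [h]; ring
    rw [ZMod.intCast_zmod_eq_zero_iff_dvd] at h'
    have b1 := abs_le.1 (hM p)
    have b2 := abs_le.1 (hM q)
    have b3 := abs_le.1 (hM t)
    have b4 := abs_le.1 (hM u)
    have := Int.eq_zero_of_abs_lt_dvd h' (by rw [abs_lt]; constructor <;> omega)
    omega
  have injm : ∀ p q, (s p : ZMod d) = s q → p = q := by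
    intro p q h
    rcases sidm p p q q (by rw [h]) with h | h <;> exact h
  have key := cfg_of_rel (L := ZMod d × A) (R := ZMod d × B) (d * Fintype.card A)
    (d * Fintype.card B)
    (Fintype.card B * Fintype.card C) (Fintype.card A * Fintype.card C)
    (by simp [ZMod.card]) (by simp [ZMod.card])
    (Nat.mul_pos (Fintype.card_pos_iff.2 ⟨a0⟩) (Fintype.card_pos_iff.2 ⟨t0⟩))
    (fun l x => ∃ t, x.1 = l.1 + (s (l.2, x.2, t) : ZMod d))
  apply key
  · rintro ⟨x, i⟩
    have : {y : ZMod d × B | ∃ t, y.1 = x + (s (i, y.2, t) : ZMod d)} =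
        (fun w : B × C => (x + (s (i, w.1, w.2) : ZMod d), w.1)) '' Set.univ := by
      ext ⟨y, j⟩
      simp only [Set.mem_ofPred_eq, Set.image_univ, Set.mem_range, Prod.mk.injEq, Prod.exists]
      constructor
      · rintro ⟨t, h⟩; exact ⟨j, t, h.symm, rfl⟩
      · rintro ⟨j', t, h, rfl⟩; exact ⟨t, h.symm⟩
    change Set.ncard {y : ZMod d × B | ∃ t, y.1 = x + (s (i, y.2, t) : ZMod d)} = _
    rw [this, Set.ncard_image_of_injective, Set.ncard_univ, Nat.card_eq_fintype_card,
      Fintype.card_prod]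
    rintro ⟨j, t⟩ ⟨j', t'⟩ h
    simp only [Prod.mk.injEq, add_right_inj] at h
    have := injm _ _ h.1
    simpa using this
  · rintro ⟨x, j⟩
    have : {y : ZMod d × A | ∃ t, x = y.1 + (s (y.2, j, t) : ZMod d)} =
        (fun w : A × C => (x - (s (w.1, j, w.2) : ZMod d), w.1)) '' Set.univ := by
      ext ⟨y, i⟩
      simp only [Set.mem_ofPred_eq, Set.image_univ, Set.mem_range, Prod.mk.injEq, Prod.exists]
      constructor
      · rintro ⟨t, h⟩; exact ⟨i, t, by rw [h]; ring, rfl⟩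
      · rintro ⟨j', t, h, rfl⟩; exact ⟨t, by rw [← h]; ring⟩
    change Set.ncard {y : ZMod d × A | ∃ t, x = y.1 + (s (y.2, j, t) : ZMod d)} = _
    rw [this, Set.ncard_image_of_injective, Set.ncard_univ, Nat.card_eq_fintype_card,
      Fintype.card_prod]
    rintro ⟨j, t⟩ ⟨j', t'⟩ h
    simp only [Prod.mk.injEq, sub_right_inj] at h
    have := injm _ _ h.1
    simpa using this
  · rintro ⟨x, i⟩ ⟨x', i'⟩ ⟨y, j⟩ ⟨y', j'⟩ ⟨t1, e1⟩ ⟨t2, e2⟩ ⟨t3, e3⟩ ⟨t4, e4⟩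
    simp only at e1 e2 e3 e4
    rcases sidm (i, j, t1) (i', j', t4) (i', j, t3) (i, j', t2) (by
      linear_combination e3 - e1 + e2 - e4) with h | h
    · left
      simp only [Prod.mk.injEq] at h
      obtain ⟨rfl, -, rfl⟩ := h
      rw [e1] at e3
      simpa using e3
    · right
      simp only [Prod.mk.injEq] at h
      obtain ⟨-, rfl, rfl⟩ := h
      rw [e1, e2]
  · have hrel : (fun a c : ZMod d × A => ∃ x : ZMod d × B,
        (∃ t, x.1 = a.1 + (s (a.2, x.2, t) : ZMod d)) ∧
        ∃ t, x.1 = c.1 + (s (c.2, x.2, t) : ZMod d)) =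
      (fun y z : ZMod d × A => ∃ j t t', y.1 + (s (y.2, j, t) : ZMod d) = z.1 + s (z.2, j, t')) := by
      funext y z
      apply propext
      constructor
      · rintro ⟨⟨x, j⟩, ⟨t, h⟩, ⟨t', h'⟩⟩
        exact ⟨j, t, t', h.symm.trans h'⟩
      · rintro ⟨j, t, t', h⟩
        exact ⟨⟨_, j⟩, ⟨t, rfl⟩, ⟨t', h⟩⟩
    rw [hrel]
    set T := (fun y z : ZMod d × A => ∃ j t t', y.1 + (s (y.2, j, t) : ZMod d) = z.1 + s (z.2, j, t'))
      with hT
    have steps : ∀ (n : ℕ) (x : ZMod d), Relation.ReflTransGen T (x, a0) (x + n, a0) := by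
      intro n x
      induction n with
      | zero => simpa using Relation.ReflTransGen.refl
      | succ n ih =>
        refine ih.trans ?_
        have := step (x + n)
        rw [add_assoc] at this
        push_cast
        exact this
    rintro ⟨x, i⟩ ⟨y, j⟩
    have g1 : T (x, i) (x + s (i, b0, t0) - s (a0, b0, t0), a0) :=
      ⟨b0, t0, t0, by simp⟩
    have g2 : T (y + s (j, b0, t0) - s (a0, b0, t0), a0) (y, j) :=
      ⟨b0, t0, t0, by simp⟩
    have g3 := steps ((y + s (j, b0, t0) - s (a0, b0, t0)) -
      (x + s (i, b0, t0) - s (a0, b0, t0)) : ZMod d).val (x + s (i, b0, t0) - s (a0, b0, t0))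
    rw [ZMod.natCast_zmod_val, add_sub_cancel] at g3
    exact ((Relation.ReflTransGen.single g1).trans g3).tail g2

/-- For all `r ≥ 2` and `k ≥ 2` there is an `N` such that every tuple
`(v, b, r, k)` with `v, b` positive, `v·r = b·k` and `v ≥ N` is configurable. -/
theorem configurable_of_large (r k : ℕ) (hr : 2 ≤ r) (hk : 2 ≤ k) :
    ∃ N : ℕ, ∀ v b : ℕ, 0 < v → 0 < b → v * r = b * k → N ≤ v →
      Configurable v b r k := by
  obtain ⟨g, r', k', hg, hco, rfl, rfl⟩ := Nat.exists_coprime' (m := r) (n := k)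
    (Nat.gcd_pos_of_pos_left _ (by omega))
  have hr' : 0 < r' := Nat.pos_of_ne_zero (by rintro rfl; simp at hr)
  have hk' : 0 < k' := Nat.pos_of_ne_zero (by rintro rfl; simp at hk)
  let a0 : Fin k' := ⟨0, hk'⟩
  let b0 : Fin r' := ⟨0, hr'⟩
  let t0 : Fin g := ⟨0, hg⟩
  let f : Fin k' × Fin r' × Fin g → ℕ := fun e => (Fintype.equivFin _ e).val
  have hf : Function.Injective f := fun x y h =>
    (Fintype.equivFin _).injective (Fin.ext h)
  have main : ∃ s : Fin k' × Fin r' × Fin g → ℤ,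
      (∀ p q t u, s p + s q = s t + s u → p = t ∨ p = u) ∧
      ∀ (d : ℕ) (x : ZMod d), Relation.ReflTransGen
      (fun y z : ZMod d × Fin k' => ∃ j t t',
        y.1 + (s (y.2, j, t) : ZMod d) = z.1 + s (z.2, j, t'))
      (x, a0) (x + 1, a0) := by
    by_cases hg2 : 2 ≤ g
    · let t1 : Fin g := ⟨1, hg2⟩
      let s : Fin k' × Fin r' × Fin g → ℤ := fun e =>
        if e = (a0, b0, t0) then 1 + 5 ^ (f (a0, b0, t1) + 1) else 5 ^ (f e + 1)
      refine ⟨s, sidon_aux (a0, b0, t0) f hf (1 + 5 ^ (f (a0, b0, t1) + 1)) ?_ s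
        (fun _ => rfl), ?_⟩
      · rw [add_sub_cancel_left, pow_succ]; exact Dvd.intro_left _ rfl
      · intro d x
        apply Relation.ReflTransGen.single
        refine ⟨b0, t0, t1, ?_⟩
        have h0 : s (a0, b0, t0) = 1 + s (a0, b0, t1) := by
          simp [s, t0, t1]
        simp only [h0]
        push_cast
        ring
    · have : g = 1 := by omega
      subst this
      let a1 : Fin k' := ⟨1, by omega⟩
      let b1 : Fin r' := ⟨1, by omega⟩
      let c : ℤ := 1 + 5 ^ (f (a1, b0, t0) + 1) - 5 ^ (f (a1, b1, t0) + 1)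
        + 5 ^ (f (a0, b1, t0) + 1)
      let s : Fin k' × Fin r' × Fin 1 → ℤ := fun e =>
        if e = (a0, b0, t0) then c else 5 ^ (f e + 1)
      refine ⟨s, sidon_aux (a0, b0, t0) f hf c ?_ s (fun _ => rfl), ?_⟩
      · simp only [c, pow_succ]
        omega
      · intro d x
        have h0 : s (a0, b0, t0) = 1 + s (a1, b0, t0) - s (a1, b1, t0) + s (a0, b1, t0) := by
          simp [s, c, a0, a1, b0, b1]
        refine (Relation.ReflTransGen.single (b := (x + s (a0, b0, t0) - s (a1, b0, t0), a1))
          ⟨b0, t0, t0, by simp⟩).tail ⟨b1, t0, t0, ?_⟩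
        simp only [h0]
        push_cast
        ring
  obtain ⟨s, sid, step⟩ := main
  obtain ⟨M, hM⟩ : ∃ M : ℕ, ∀ e, |s e| ≤ M := by
    refine ⟨∑ e, (s e).natAbs, fun e => ?_⟩
    rw [Int.abs_eq_natAbs]
    exact_mod_cast Finset.single_le_sum (f := fun e => (s e).natAbs) (fun _ _ => Nat.zero_le _) (Finset.mem_univ e)
  refine ⟨(4 * M + 1) * k', fun v b hv hb hvb hN => ?_⟩
  have e1 : v * r' = b * k' := by
    apply Nat.eq_of_mul_eq_mul_right hg
    linarith
  obtain ⟨d, rfl⟩ : k' ∣ v := hco.symm.dvd_of_dvd_mul_right (Dvd.intro_left _ e1.symm)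
  have e2 : b = d * r' := by
    apply Nat.eq_of_mul_eq_mul_right hk'
    linarith
  subst e2
  have hd : 4 * M + 1 ≤ d := by
    apply Nat.le_of_mul_le_mul_right _ hk'
    linarith
  have := cfg_cyclic a0 b0 t0 s M hM sid d (by omega) (step d)
  simpa [mul_comm] using this
end
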